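/- Let P be a simple 3-polytope with p_3 = 0, p_4 ≤ 2, p_7 ≤ 1, and p_k = 0 for all k ≥ 8. Then P has no 3-belts; in particular, P is a flag 3-polytope. -/

import Mathlib

open Set

noncomputable section

/-- The ambient space `ℝ³`. -/
abbrev E3 := EuclideanSpace ℝ (Fin 3)

/-- The cyclic successor in `Fin k`. -/
def nxt {k : ℕ} (i : Fin k) : Fin k := ⟨(i.1 + 1) % k, Nat.mod_lt _ i.pos⟩

/-- The cyclic predecessor in `Fin k`. -/
def prv {k : ℕ} (i : Fin k) : Fin k := ⟨(i.1 + (k - 1)) % k, Nat.mod_lt _ i.pos⟩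

/-- A convex polytope in `ℝ³`: the convex hull of a finite set of points. -/
def IsPolytope (P : Set E3) : Prop := ∃ V : Finset E3, P = convexHull ℝ (V : Set E3)

/-- The dimension of a subset of `ℝ³` (the dimension of its affine hull). -/
def setDim (A : Set E3) : ℕ := Module.finrank ℝ ↥(vectorSpan ℝ A)

/-- A face of a polytope: a nonempty closed convex extreme subset. -/
def IsFaceOf (F P : Set E3) : Prop :=
  F.Nonempty ∧ IsClosed F ∧ Convex ℝ F ∧ IsExtreme ℝ P F

/-- A facet: a `2`-dimensional face. -/
def IsFacetOf (F P : Set E3) : Prop := IsFaceOf F P ∧ setDim F = 2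

/-- An edge: a `1`-dimensional face. -/
def IsEdgeOf (F P : Set E3) : Prop := IsFaceOf F P ∧ setDim F = 1

/-- A vertex: a point whose singleton is a face. -/
def IsVertexOf (v : E3) (P : Set E3) : Prop := IsFaceOf {v} P

/-- The set of facets of `P`. -/
def facets (P : Set E3) : Set (Set E3) := {F | IsFacetOf F P}

/-- A simple 3-polytope: a 3-dimensional convex polytope each of whose vertices
is contained in exactly 3 facets. -/
def IsSimplePolytope3 (P : Set E3) : Prop :=
  IsPolytope P ∧ setDim P = 3 ∧
    ∀ v : E3, IsVertexOf v P → {F | IsFacetOf F P ∧ v ∈ F}.ncard = 3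

/-- The number of edges of a facet `F` of `P`. -/
def facetEdges (P F : Set E3) : ℕ := {e | IsEdgeOf e P ∧ e ⊆ F}.ncard

/-- `pVec P k` is the number of `k`-gonal facets of `P`. -/
def pVec (P : Set E3) (k : ℕ) : ℕ := {F | IsFacetOf F P ∧ facetEdges P F = k}.ncard

/-- A (mathematical) fullerene: a simple 3-polytope with all facets pentagons
and hexagons. -/
def IsFullerene (P : Set E3) : Prop :=
  IsSimplePolytope3 P ∧ ∀ F, IsFacetOf F P → facetEdges P F = 5 ∨ facetEdges P F = 6

/-- A `k`-loop in `P` (`k ≥ 2`): a cyclic sequence of facets in which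
(cyclically) consecutive facets intersect in an edge; a `1`-loop is a single facet. -/
def IsLoop (P : Set E3) {k : ℕ} (L : Fin k → Set E3) : Prop :=
  0 < k ∧ (∀ i, IsFacetOf (L i) P) ∧ (2 ≤ k → ∀ i, IsEdgeOf (L i ∩ L (nxt i)) P)

/-- A simple loop: a loop with pairwise different facets. -/
def IsSimpleLoop (P : Set E3) {k : ℕ} (L : Fin k → Set E3) : Prop :=
  IsLoop P L ∧ Function.Injective L

/-- A `k`-belt (`k ≥ 3`): a `k`-loop such that for `k = 3` the three facets have empty
total intersection, and for `k ≥ 4` two facets intersect iff they are cyclically successive. -/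
def IsBelt (P : Set E3) {k : ℕ} (L : Fin k → Set E3) : Prop :=
  3 ≤ k ∧ IsLoop P L ∧
    (k = 3 → ∀ i, L i ∩ L (nxt i) ∩ L (nxt (nxt i)) = ∅) ∧
    (4 ≤ k → ∀ p q, p ≠ q → ((L p ∩ L q).Nonempty ↔ q = nxt p ∨ p = nxt q))

/-- A flag 3-polytope: a simple 3-polytope different from the tetrahedron
(i.e. not having exactly 4 facets) without 3-belts. -/
def IsFlag3Polytope (P : Set E3) : Prop :=
  IsSimplePolytope3 P ∧ (facets P).ncard ≠ 4 ∧ ∀ B : Fin 3 → Set E3, ¬ IsBelt P B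

/-- `γ` is the simple edge-cycle of `P` traced by the cyclically ordered distinct
vertices `v 0, …, v (n-1)` (`n ≥ 3`), consecutive ones joined by edges of `P`. -/
def IsSimpleEdgeCycleVia (P γ : Set E3) {n : ℕ} (v : Fin n → E3) : Prop :=
  3 ≤ n ∧ Function.Injective v ∧ (∀ i, IsVertexOf (v i) P) ∧
    (∀ i, IsEdgeOf (segment ℝ (v i) (v (nxt i))) P) ∧
    γ = ⋃ i, segment ℝ (v i) (v (nxt i))

/-- A simple edge-cycle in the graph of `P`. -/
def IsSimpleEdgeCycle (P γ : Set E3) : Prop :=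
  ∃ (n : ℕ) (v : Fin n → E3), IsSimpleEdgeCycleVia P γ v

/-- `C` is a connected component of the set `A`. -/
def IsCompOf (C A : Set E3) : Prop := ∃ x ∈ A, C = connectedComponentIn A x

/-- The loop `L` is obtained by walking round the simple edge-cycle `γ` inside the
connected component `C` of `∂P ∖ γ`: the facets of `L` lie on the side `C`, and the
edges of `γ`, in cyclic order, lie in the facets of `L` in cyclic order (the loop
index advancing exactly when the facet changes, and making exactly one turn). -/
def WalksRound (P γ C : Set E3) {k : ℕ} (L : Fin k → Set E3) : Prop :=
  IsLoop P L ∧ (∀ i, intrinsicInterior ℝ (L i) ⊆ C) ∧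
    ∃ (n : ℕ) (v : Fin n → E3) (φ : Fin n → Fin k),
      IsSimpleEdgeCycleVia P γ v ∧
      (∀ i, segment ℝ (v i) (v (nxt i)) ⊆ L (φ i)) ∧
      (∀ i, φ (nxt i) = φ i ∨ φ (nxt i) = nxt (φ i)) ∧
      Function.Surjective φ ∧
      (2 ≤ k → (Finset.univ.filter (fun i : Fin n => φ (nxt i) ≠ φ i)).card = k)

/-- Two loops border each other: they are obtained by walking round the same simple
edge-cycle `γ` in the two different connected components of `∂P ∖ γ`. -/
def Borders (P : Set E3) {k₁ k₂ : ℕ} (L₁ : Fin k₁ → Set E3) (L₂ : Fin k₂ → Set E3) : Prop :=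
  ∃ γ C₁ C₂ : Set E3, IsCompOf C₁ (frontier P \ γ) ∧ IsCompOf C₂ (frontier P \ γ) ∧
    C₁ ≠ C₂ ∧ WalksRound P γ C₁ L₁ ∧ WalksRound P γ C₂ L₂

/-- A loop surrounds the facet `F` if it borders the `1`-loop `(F)`. -/
def Surrounds (P : Set E3) {k : ℕ} (L : Fin k → Set E3) (F : Set E3) : Prop :=
  IsFacetOf F P ∧ Borders P L (fun _ : Fin 1 => F)

/-- The number of edges of `P` lying in the facet `F` and in the set `γ`. -/
def edgesInCommon (P F γ : Set E3) : ℕ := {e | IsEdgeOf e P ∧ e ⊆ F ∧ e ⊆ γ}.ncard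
/-- A simple 3-polytope all of whose facets are pentagons and hexagons except for
at most one exceptional facet, which is a quadrangle or a heptagon. -/
def IsAlmostFullerene (P : Set E3) : Prop :=
  IsSimplePolytope3 P ∧
    (∀ F, IsFacetOf F P → facetEdges P F ∈ ({4, 5, 6, 7} : Set ℕ)) ∧
    {F | IsFacetOf F P ∧ (facetEdges P F = 4 ∨ facetEdges P F = 7)}.ncard ≤ 1

/-- The (combinatorial) dodecahedron: a simple 3-polytope with all facets pentagons. -/
def IsDodecahedron (P : Set E3) : Prop :=
  IsSimplePolytope3 P ∧ ∀ F, IsFacetOf F P → facetEdges P F = 5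

/-- `e` and `e'` are opposite edges of the hexagonal facet `H`: they are disjoint and no
edge of `H` meets both of them. -/
def OppositeEdges (P H e e' : Set E3) : Prop :=
  IsEdgeOf e P ∧ IsEdgeOf e' P ∧ e ⊆ H ∧ e' ⊆ H ∧ e ∩ e' = ∅ ∧
    ∀ e'', IsEdgeOf e'' P → e'' ⊆ H → (e'' ∩ e).Nonempty → e'' ≠ e → e'' ∩ e' = ∅

/-- A cap: a pentagonal facet `F₀` together with a surrounding 5-belt of pentagons. -/
def IsCapOf (P F₀ : Set E3) (L : Fin 5 → Set E3) : Prop :=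
  IsFacetOf F₀ P ∧ facetEdges P F₀ = 5 ∧ (∀ i, facetEdges P (L i) = 5) ∧
    IsBelt P L ∧ Surrounds P L F₀

/-- The number of 5-belts of `P` (counted as sets of facets). -/
def fiveBeltCount (P : Set E3) : ℕ :=
  {S : Set (Set E3) | ∃ B : Fin 5 → Set E3, IsBelt P B ∧ S = Set.range B}.ncard

/-- The structure of the `k`-th fullerene of Family I: two caps separated by `k`
hexagonal 5-belts, each bordering the next (for `k = 0` the caps border each other,
giving the dodecahedron). -/
def FamilyI (P : Set E3) (k : ℕ) : Prop :=
  ∃ (F₀ F₀' : Set E3) (L L' : Fin 5 → Set E3) (B : ℕ → Fin 5 → Set E3),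
    IsCapOf P F₀ L ∧ IsCapOf P F₀' L' ∧
    (∀ i < k, IsBelt P (B i) ∧ ∀ j, facetEdges P (B i j) = 6) ∧
    (∀ i, i + 1 < k → Borders P (B i) (B (i + 1))) ∧
    (0 < k → Borders P L (B 0) ∧ Borders P (B (k - 1)) L') ∧
    (k = 0 → Borders P L L') ∧
    facets P = {F₀, F₀'} ∪ Set.range L ∪ Set.range L' ∪ ⋃ i ∈ Set.Iio k, Set.range (B i)

/-- `P` is obtained from `Q` by an `(s,k;t₀,t₁)`-truncation with new edge `Enew`:
`P` is cut off from `Q` by a halfspace `{f ≤ c}` whose boundary plane crosses exactly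
two edges `E₀ ≠ E₁` of a `k`-gonal facet `F` of `Q`, cutting off exactly `s` vertices,
all belonging to `F`; `G₀` and `G₁` are the facets meeting `F` along `E₀` and `E₁`, and
they are `t₀`- and `t₁`-gons; `Enew` is the new edge dividing `F`. -/
def IsTruncation (s k t₀ t₁ : ℕ) (Q P Enew : Set E3) : Prop :=
  IsSimplePolytope3 Q ∧ IsSimplePolytope3 P ∧
    ∃ (F E₀ E₁ G₀ G₁ : Set E3) (f : E3 →ₗ[ℝ] ℝ) (c : ℝ),
      IsFacetOf F Q ∧ facetEdges Q F = k ∧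
      IsEdgeOf E₀ Q ∧ IsEdgeOf E₁ Q ∧ E₀ ≠ E₁ ∧ E₀ ⊆ F ∧ E₁ ⊆ F ∧
      IsFacetOf G₀ Q ∧ IsFacetOf G₁ Q ∧ G₀ ≠ F ∧ G₁ ≠ F ∧ E₀ ⊆ G₀ ∧ E₁ ⊆ G₁ ∧
      facetEdges Q G₀ = t₀ ∧ facetEdges Q G₁ = t₁ ∧
      P = Q ∩ {x | f x ≤ c} ∧
      (∀ e, IsEdgeOf e Q → (∃ x ∈ e, c < f x) → (∃ x ∈ e, f x < c) → e = E₀ ∨ e = E₁) ∧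
      (∃ x ∈ E₀, c < f x) ∧ (∃ x ∈ E₀, f x < c) ∧
      (∃ x ∈ E₁, c < f x) ∧ (∃ x ∈ E₁, f x < c) ∧
      (∀ v, IsVertexOf v Q → f v ≠ c) ∧
      {v | IsVertexOf v Q ∧ c < f v}.ncard = s ∧
      (∀ v, IsVertexOf v Q → c < f v → v ∈ F) ∧
      Enew = F ∩ {x | f x = c}

/-- Combinatorial equivalence of polytopes: an inclusion-preserving bijection
between the sets of faces. -/
def CombEquiv (P Q : Set E3) : Prop :=
  ∃ φ : {A : Set E3 // IsFaceOf A P} ≃ {A : Set E3 // IsFaceOf A Q},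
    ∀ A B : {A : Set E3 // IsFaceOf A P}, A.1 ⊆ B.1 ↔ (φ A).1 ⊆ (φ B).1

/-- Combinatorial equivalence sending the face `Ep` of `P` to the face `Eq` of `Q`. -/
def CombEquivMapping (P Q Ep Eq : Set E3) : Prop :=
  ∃ φ : {A : Set E3 // IsFaceOf A P} ≃ {A : Set E3 // IsFaceOf A Q},
    (∀ A B : {A : Set E3 // IsFaceOf A P}, A.1 ⊆ B.1 ↔ (φ A).1 ⊆ (φ B).1) ∧
    ∀ h : IsFaceOf Ep P, ((φ ⟨Ep, h⟩) : {A : Set E3 // IsFaceOf A Q}).1 = Eq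

/-- The straightening of `P` along the edge `E` is defined: `P` is combinatorially
obtained from some simple 3-polytope `Q` by an `(s,k)`-truncation whose new edge
corresponds to `E`. -/
def StraighteningDefined (P E : Set E3) : Prop :=
  ∃ (s k t₀ t₁ : ℕ) (Q P₁ E₁ : Set E3),
    IsTruncation s k t₀ t₁ Q P₁ E₁ ∧ CombEquivMapping P P₁ E E₁

/-- `P` is obtained from `Q` by one of the truncations
`(1;4,5)`, `(1;5,5)`, `(2,6;4,5)`, `(2,6;5,5)`, `(2,6;5,6)`, `(2,7;5,5)`, `(2,7;5,6)`. -/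
def FullereneStep (Q P : Set E3) : Prop :=
  ∃ (s k t₀ t₁ : ℕ) (Enew : Set E3), IsTruncation s k t₀ t₁ Q P Enew ∧
    ((s = 1 ∧ (({t₀, t₁} : Finset ℕ) = {4, 5} ∨ ({t₀, t₁} : Finset ℕ) = {5, 5})) ∨
     (s = 2 ∧ k = 6 ∧ (({t₀, t₁} : Finset ℕ) = {4, 5} ∨ ({t₀, t₁} : Finset ℕ) = {5, 5} ∨
        ({t₀, t₁} : Finset ℕ) = {5, 6})) ∨
     (s = 2 ∧ k = 7 ∧ (({t₀, t₁} : Finset ℕ) = {5, 5} ∨ ({t₀, t₁} : Finset ℕ) = {5, 6})))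



section Comb
variable {Φ : Type*} [Fintype Φ]
set_option linter.unusedSectionVars false

/-- Abstract closed surface: `T a b c` means the facets `a,b,c` share a vertex. -/
structure Surf (T : Φ → Φ → Φ → Prop) : Prop where
  s1 : ∀ a b c, T a b c → T b a c
  s2 : ∀ a b c, T a b c → T a c b
  ne : ∀ a b c, T a b c → a ≠ b
  two : ∀ a b c, T a b c → ∃ d, d ≠ c ∧ T a b d ∧ ∀ e, T a b e → e = c ∨ e = d
  link : ∀ (a : Φ) (N : Set Φ), (∃ b ∈ N, ∃ c, T a b c) → (∀ b c, b ∈ N → T a b c → c ∈ N) →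
    ∀ b, (∃ c, T a b c) → b ∈ N

/-- adjacency -/
def Adjf (T : Φ → Φ → Φ → Prop) (a b : Φ) : Prop := ∃ c, T a b c

open Classical in
/-- neighbours -/
noncomputable def Nb (T : Φ → Φ → Φ → Prop) (a : Φ) : Finset Φ := Finset.univ.filter (Adjf T a)

open Classical in
/-- number of big facets in a set -/
noncomputable def q7 (T : Φ → Φ → Φ → Prop) (S : Finset Φ) : ℕ :=
  (S.filter (fun x => (Nb T x).card = 7)).card

/-- One side of a belt. -/
structure Side (T : Φ → Φ → Φ → Prop) (a b c : Φ) (S : Finset Φ) : Prop where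
  nT : ¬ T a b c
  ha : a ∉ S
  hb : b ∉ S
  hc : c ∉ S
  cl : ∀ x ∈ S, ∀ y, Adjf T x y → y ∈ S ∨ y = a ∨ y = b ∨ y = c
  eab : ∃ u w, u ∈ S ∧ w ∉ S ∧ T a b u ∧ T a b w
  ebc : ∃ u w, u ∈ S ∧ w ∉ S ∧ T b c u ∧ T b c w
  eac : ∃ u w, u ∈ S ∧ w ∉ S ∧ T a c u ∧ T a c w

variable {T : Φ → Φ → Φ → Prop}

theorem Surf.ends (h : Surf T) {a b u w x : Φ} (h1 : T a b u) (h2 : T a b w) (hne : u ≠ w)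
    (h3 : T a b x) : x = u ∨ x = w := by
  obtain ⟨d, hd, h4, h5⟩ := h.two a b u h1
  have := h5 w h2
  have := h5 x h3
  grind

theorem Surf.rot (h : Surf T) {a b c : Φ} (h1 : T a b c) : T b c a := h.s2 _ _ _ (h.s1 _ _ _ h1)

theorem Surf.swap13 (h : Surf T) {a b c : Φ} (h1 : T a b c) : T c b a :=
  h.s1 _ _ _ (h.rot h1)

theorem mem_Nb {a b : Φ} : b ∈ Nb T a ↔ Adjf T a b := by
  classical
  simp [Nb]

theorem Surf.adj_symm (h : Surf T) {a b : Φ} (h1 : Adjf T a b) : Adjf T b a := by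
  obtain ⟨c, hc⟩ := h1
  exact ⟨c, h.s1 _ _ _ hc⟩

theorem Side.swap12 (h : Surf T) {a b c : Φ} {S : Finset Φ} (s : Side T a b c S) :
    Side T b a c S := by
  obtain ⟨h1, h2, h3, h4, h5, ⟨u1, w1, a1, a2, a3, a4⟩, h7, h8⟩ := s
  exact ⟨fun t => h1 (h.s1 _ _ _ t), h3, h2, h4, fun x hx y hy => by have := h5 x hx y hy; tauto,
    ⟨u1, w1, a1, a2, h.s1 _ _ _ a3, h.s1 _ _ _ a4⟩, h8, h7⟩

theorem Side.swap23 (h : Surf T) {a b c : Φ} {S : Finset Φ} (s : Side T a b c S) :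
    Side T a c b S := by
  obtain ⟨h1, h2, h3, h4, h5, h6, ⟨u1, w1, a1, a2, a3, a4⟩, h8⟩ := s
  exact ⟨fun t => h1 (h.s2 _ _ _ t), h2, h4, h3, fun x hx y hy => by have := h5 x hx y hy; tauto,
    h8, ⟨u1, w1, a1, a2, h.s1 _ _ _ a3, h.s1 _ _ _ a4⟩, h6⟩

open Classical in
/-- length of the boundary of a side -/
noncomputable def len (T : Φ → Φ → Φ → Prop) (a b c : Φ) (S : Finset Φ) : ℕ :=
  (S ∩ Nb T a).card + (S ∩ Nb T b).card + (S ∩ Nb T c).card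

open Classical in
/-- deg ≤ card of closed set. -/
theorem Surf.link_card (h : Surf T) (a : Φ) (N : Finset Φ) (h1 : ∃ b ∈ N, ∃ c, T a b c)
    (h2 : ∀ b c, b ∈ N → T a b c → c ∈ N) : (Nb T a).card ≤ N.card := by
  apply Finset.card_le_card
  intro x hx
  have := h.link a (N : Set Φ) (by simpa using h1) (by simpa using h2) x (mem_Nb.1 hx)
  simpa using this

open Classical in
theorem Surf.step1 (h : Surf T) (hd : ∀ x, 4 ≤ (Nb T x).card ∧ (Nb T x).card ≤ 7)
    {a b c g : Φ} {S : Finset Φ} (s : Side T a b c S) (hg : g ∈ S) (h1 : T a b g) (h2 : T b c g) :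
    ∃ S', S' ⊂ S ∧ Side T a c g S' ∧ len T a c g S' + q7 T S' ≤ len T a b c S + q7 T S := by
  have hab := h.ne _ _ _ h1
  have hbc := h.ne _ _ _ h2
  obtain ⟨nT, ha, hb, hc, cl, ⟨u1, w1, a1, a2, a3, a4⟩, ⟨u2, w2, b1, b2, b3, b4⟩,
    ⟨u3, w3, c1, c2, c3, c4⟩⟩ := s
  have hac := h.ne _ _ _ c3
  have hag := h.ne _ _ _ (h.s2 _ _ _ h1)
  have hbg := h.ne _ _ _ (h.rot h1)
  have hcg := h.ne _ _ _ (h.rot h2)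
  have e1 : ∀ x, T a b x → x = g ∨ x = w1 := fun x hx => h.ends h1 a4 (by grind) hx
  have e2 : ∀ x, T b c x → x = g ∨ x = w2 := fun x hx => h.ends h2 b4 (by grind) hx
  have e3 : ∀ x, T a c x → x = u3 ∨ x = w3 := fun x hx => h.ends c3 c4 (by grind) hx
  have ebg : ∀ x, T b g x → x = a ∨ x = c := fun x hx => h.ends (h.rot h1) (h.s2 _ _ _ h2) hac hx
  by_cases hu : u3 = g
  · exfalso
    subst hu
    have : (Nb T u3).card ≤ ({a, b, c} : Finset Φ).card := by
      apply h.link_card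
      · exact ⟨a, by simp, b, h.rot (h.rot h1)⟩
      · intro x y hx hT
        have k1 : ∀ x, T a u3 x → x = b ∨ x = c :=
          fun x hx => h.ends (h.s2 _ _ _ h1) (h.s2 _ _ _ c3) hbc hx
        have k2 : ∀ x, T c u3 x → x = b ∨ x = a :=
          fun x hx => h.ends (h.rot h2) (h.rot c3) (Ne.symm hab) hx
        have hT' := h.s1 _ _ _ hT
        simp only [Finset.mem_insert, Finset.mem_singleton] at hx ⊢
        rcases hx with rfl | rfl | rfl
        · have := k1 _ hT'; tauto
        · have := ebg _ hT'; tauto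
        · have := k2 _ hT'; tauto
    have h3 : ({a, b, c} : Finset Φ).card ≤ 3 := Finset.card_le_three
    have := (hd u3).1
    omega
  -- the only neighbour of b in S is g
  have hbS : ∀ x, x ∈ S → Adjf T b x → x = g := by
    intro x hx hbx
    have := h.link b {y | y ∉ S ∨ y = g} ⟨a, by simp [ha], g, h.s1 _ _ _ h1⟩ (by
      intro y z hy hT
      simp only [Set.mem_ofPred_eq] at hy ⊢
      by_contra hz
      push Not at hz
      rcases hy with hy | rfl
      · have := cl z hz.1 y ⟨b, h.swap13 hT⟩
        have hby := h.ne _ _ _ hT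
        rcases this with h' | rfl | rfl | rfl
        · exact hy h'
        · have := e1 _ (h.s1 _ _ _ hT); grind
        · exact hby rfl
        · have := e2 _ hT; grind
      · have := ebg _ hT; grind) x hbx
    simp only [Set.mem_ofPred_eq] at this
    tauto
  have nTg : ¬ T a c g := fun ht => by have := e3 _ ht; grind
  refine ⟨S.erase g, Finset.erase_ssubset hg, ⟨nTg, by simp [ha], by simp [hc], by simp, ?_, ?_, ?_, ?_⟩, ?_⟩
  · intro x hx y hxy
    simp only [Finset.mem_erase] at hx ⊢
    have := cl x hx.2 y hxy
    have h5 : y = b → x = g := fun hy => hbS x hx.2 (hy ▸ h.adj_symm hxy)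
    grind
  · exact ⟨u3, w3, by simp [hu, c1], by simp [c2], c3, c4⟩
  · obtain ⟨d, d1, d2, d3⟩ := h.two c g b (h.rot h2)
    refine ⟨d, b, ?_, by simp [hb], d2, h.rot h2⟩
    have := cl g hg d ⟨c, h.rot d2⟩
    have n1 := h.ne _ _ _ (h.rot d2)
    have n2 := h.ne _ _ _ (h.rot (h.rot d2))
    have n3 : d ≠ a := fun hda => nTg (hda ▸ h.rot (h.rot d2))
    simp only [Finset.mem_erase]
    grind
  · obtain ⟨d, d1, d2, d3⟩ := h.two a g b (h.s2 _ _ _ h1)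
    refine ⟨d, b, ?_, by simp [hb], d2, h.s2 _ _ _ h1⟩
    have := cl g hg d ⟨a, h.rot d2⟩
    have n1 := h.ne _ _ _ (h.rot d2)
    have n2 := h.ne _ _ _ (h.rot (h.rot d2))
    have n3 : d ≠ c := fun hda => nTg (hda ▸ h.s2 _ _ _ d2)
    simp only [Finset.mem_erase]
    grind
  · have k1 : (S.erase g ∩ Nb T a).card + 1 = (S ∩ Nb T a).card := by
      rw [Finset.erase_inter, Finset.card_erase_add_one]
      simp [hg, mem_Nb]
      exact ⟨b, h.s2 _ _ _ h1⟩
    have k2 : (S.erase g ∩ Nb T c).card + 1 = (S ∩ Nb T c).card := by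
      rw [Finset.erase_inter, Finset.card_erase_add_one]
      simp [hg, mem_Nb]
      exact ⟨b, h.rot h2⟩
    have k3 : 1 ≤ (S ∩ Nb T b).card := by
      apply Finset.card_pos.2
      exact ⟨g, by simp [hg, mem_Nb]; exact ⟨a, h.rot h1⟩⟩
    have k4 : (S.erase g ∩ Nb T g).card + 3 ≤ (Nb T g).card := by
      have : ({a, b, c} : Finset Φ).card = 3 := Finset.card_eq_three.2 ⟨a, b, c, hab, hac, hbc, rfl⟩
      rw [← this, ← Finset.card_union_of_disjoint]
      · apply Finset.card_le_card
        intro x hx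
        simp only [Finset.mem_union, Finset.mem_inter, Finset.mem_insert, Finset.mem_singleton] at hx
        rcases hx with hx | rfl | rfl | rfl
        · exact hx.2
        · exact mem_Nb.2 ⟨b, h.rot (h.rot h1)⟩
        · exact mem_Nb.2 ⟨a, h.swap13 h1⟩
        · exact mem_Nb.2 ⟨b, h.swap13 h2⟩
      · rw [Finset.disjoint_right]
        intro x hx
        simp only [Finset.mem_insert, Finset.mem_singleton] at hx
        grind
    have k5 : q7 T (S.erase g) + (if (Nb T g).card = 7 then 1 else 0) = q7 T S := by
      unfold q7
      rw [Finset.filter_erase]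
      split_ifs with h7
      · rw [Finset.card_erase_add_one]; simp [hg, h7]
      · rw [Finset.erase_eq_of_notMem]; · rfl
        simp [h7]
    have := hd g
    unfold len
    split_ifs at k5 <;> omega

set_option maxHeartbeats 1000000 in
open Classical in
theorem Surf.step2 (h : Surf T) (hd : ∀ x, 4 ≤ (Nb T x).card ∧ (Nb T x).card ≤ 7)
    (h4 : (Finset.univ.filter (fun x => (Nb T x).card = 4)).card ≤ 2)
    {a b c g1 g2 g3 : Φ} {S : Finset Φ} (s : Side T a b c S) (hg1 : g1 ∈ S) (hg2 : g2 ∈ S)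
    (hg3 : g3 ∈ S) (h1 : T a b g1) (h2 : T b c g2) (h3 : T a c g3)
    (n12 : g1 ≠ g2) (n13 : g1 ≠ g3) (n23 : g2 ≠ g3) (hl : len T a b c S + q7 T S ≤ 6) :
    ∃ S', S' ⊂ S ∧ Side T g1 g2 g3 S' ∧ len T g1 g2 g3 S' + q7 T S' ≤ 6 := by
  have aux : ∀ {x y z : Φ}, y ∈ S → z ∈ S → Adjf T x y → Adjf T x z → y ≠ z →
      2 ≤ (S ∩ Nb T x).card ∧ ((S ∩ Nb T x).card = 2 → S ∩ Nb T x = {y, z}) := by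
    intro x y z hy hz hxy hxz hne
    have hsub : ({y, z} : Finset Φ) ⊆ S ∩ Nb T x := by
      intro t ht
      simp only [Finset.mem_insert, Finset.mem_singleton] at ht
      rcases ht with rfl | rfl <;> simp [*, mem_Nb]
    have hc := Finset.card_pair hne
    refine ⟨hc ▸ Finset.card_le_card hsub, fun h' => ?_⟩
    exact (Finset.eq_of_subset_of_card_le hsub (by omega)).symm
  obtain ⟨A1, A2⟩ := aux (x := a) hg1 hg3 ⟨b, h.s2 _ _ _ h1⟩ ⟨c, h.s2 _ _ _ h3⟩ n13
  obtain ⟨B1, B2⟩ := aux (x := b) hg1 hg2 ⟨a, h.rot h1⟩ ⟨c, h.s2 _ _ _ h2⟩ n12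
  obtain ⟨C1, C2⟩ := aux (x := c) hg2 hg3 ⟨b, h.rot h2⟩ ⟨a, h.rot h3⟩ n23
  unfold len at hl
  have q0 : q7 T S = 0 := by omega
  replace A2 := A2 (by omega)
  replace B2 := B2 (by omega)
  replace C2 := C2 (by omega)
  have mA : ∀ x ∈ S, Adjf T a x → x = g1 ∨ x = g3 := fun x hx hax => by
    have : x ∈ S ∩ Nb T a := by simp [hx, mem_Nb, hax]
    rw [A2] at this; simpa using this
  have mB : ∀ x ∈ S, Adjf T b x → x = g1 ∨ x = g2 := fun x hx hax => by
    have : x ∈ S ∩ Nb T b := by simp [hx, mem_Nb, hax]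
    rw [B2] at this; simpa using this
  have mC : ∀ x ∈ S, Adjf T c x → x = g2 ∨ x = g3 := fun x hx hax => by
    have : x ∈ S ∩ Nb T c := by simp [hx, mem_Nb, hax]
    rw [C2] at this; simpa using this
  clear A1 B1 C1 A2 B2 C2
  obtain ⟨nT, ha, hb, hc, cl, -, -, -⟩ := s
  have t1 : T a g1 g3 := by
    obtain ⟨x, x1, x2, x3⟩ := h.two a g1 b (h.s2 _ _ _ h1)
    have m1 := cl g1 hg1 x ⟨a, h.rot x2⟩
    have n1 := h.ne _ _ _ (h.rot x2)
    have n2 := h.ne _ _ _ (h.rot (h.rot x2))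
    have n3 : x ≠ c := by
      rintro rfl; have := mC g1 hg1 ⟨a, h.swap13 x2⟩; grind
    have := mA x (by grind) ⟨g1, h.s2 _ _ _ x2⟩
    have : x = g3 := by grind
    exact this ▸ x2
  have t2 : T b g1 g2 := by
    obtain ⟨x, x1, x2, x3⟩ := h.two b g1 a (h.rot h1)
    have m1 := cl g1 hg1 x ⟨b, h.rot x2⟩
    have n1 := h.ne _ _ _ (h.rot x2)
    have n2 := h.ne _ _ _ (h.rot (h.rot x2))
    have n3 : x ≠ c := by
      rintro rfl; have := mC g1 hg1 ⟨b, h.swap13 x2⟩; grind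
    have := mB x (by grind) ⟨g1, h.s2 _ _ _ x2⟩
    have : x = g2 := by grind
    exact this ▸ x2
  have t3 : T c g2 g3 := by
    obtain ⟨x, x1, x2, x3⟩ := h.two c g2 b (h.rot h2)
    have m1 := cl g2 hg2 x ⟨c, h.rot x2⟩
    have n1 := h.ne _ _ _ (h.rot x2)
    have n2 := h.ne _ _ _ (h.rot (h.rot x2))
    have n3 : x ≠ a := by
      rintro rfl; have := mA g2 hg2 ⟨c, h.swap13 x2⟩; grind
    have := mC x (by grind) ⟨g2, h.s2 _ _ _ x2⟩
    have : x = g3 := by grind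
    exact this ▸ x2
  -- generic: a 4-cycle link
  have four : ∀ {g x y z w : Φ}, T g x y → T g y z → T g z w → T g w x → x ≠ z → y ≠ w →
      (Nb T g).card ≤ 4 := by
    intro g x y z w k1 k2 k3 k4 nxz nyw
    have : (Nb T g).card ≤ ({x, y, z, w} : Finset Φ).card := by
      apply h.link_card
      · exact ⟨x, by simp, y, k1⟩
      · intro p r hp hT
        simp only [Finset.mem_insert, Finset.mem_singleton] at hp ⊢
        rcases hp with rfl | rfl | rfl | rfl
        · have := h.ends k1 (h.s2 _ _ _ k4) nyw hT; tauto
        · have := h.ends (h.s2 _ _ _ k1) k2 nxz hT; tauto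
        · have := h.ends (h.s2 _ _ _ k2) k3 nyw hT; tauto
        · have := h.ends (h.s2 _ _ _ k3) k4 (Ne.symm nxz) hT; tauto
    exact this.trans Finset.card_le_four
  have ag : ∀ g ∈ S, a ≠ g ∧ b ≠ g ∧ c ≠ g := by grind
  have nTg : ¬ T g1 g2 g3 := by
    intro ht
    have f1 := four (h.rot (h.rot h1)) (h.s1 _ _ _ t2) ht (h.rot t1)
      (ag _ hg2).1 (ag _ hg3).2.1
    have f2 := four (h.rot (h.rot h2)) (h.s1 _ _ _ t3) (h.rot ht) (h.swap13 t2)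
      (ag _ hg3).2.1 (ag _ hg1).2.2
    have f3 := four (h.rot (h.rot h3)) (h.rot (h.rot t3)) (h.swap13 ht) (h.swap13 t1)
      (ag _ hg2).1 (ag _ hg1).2.2
    have : ({g1, g2, g3} : Finset Φ).card = 3 := Finset.card_eq_three.2 ⟨g1, g2, g3, n12, n13, n23, rfl⟩
    have : ({g1, g2, g3} : Finset Φ).card ≤ (Finset.univ.filter (fun x => (Nb T x).card = 4)).card := by
      apply Finset.card_le_card
      intro x hx
      simp only [Finset.mem_insert, Finset.mem_singleton] at hx
      have := hd x
      simp only [Finset.mem_filter, Finset.mem_univ, true_and]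
      rcases hx with rfl | rfl | rfl <;> omega
    omega
  have memS : ∀ x, x ∈ S \ {g1, g2, g3} ↔ x ∈ S ∧ x ≠ g1 ∧ x ≠ g2 ∧ x ≠ g3 := by
    intro x; simp
  have hno : ∀ x ∈ S \ {g1, g2, g3}, ¬ Adjf T a x ∧ ¬ Adjf T b x ∧ ¬ Adjf T c x := by
    intro x hx
    rw [memS] at hx
    refine ⟨fun k => ?_, fun k => ?_, fun k => ?_⟩
    · have := mA x hx.1 k; tauto
    · have := mB x hx.1 k; tauto
    · have := mC x hx.1 k; tauto
  have q0' : q7 T (S \ {g1, g2, g3}) = 0 := by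
    have : q7 T (S \ {g1, g2, g3}) ≤ q7 T S := by
      unfold q7
      exact Finset.card_le_card (Finset.filter_subset_filter _ Finset.sdiff_subset)
    omega
  have deg6 : ∀ g ∈ S, (Nb T g).card ≤ 6 := by
    intro g hg
    have := hd g
    unfold q7 at q0
    rw [Finset.card_eq_zero, Finset.filter_eq_empty_iff] at q0
    have := q0 hg
    omega
  have cnt : ∀ {g x y z w : Φ}, g ∈ S → Adjf T g x → Adjf T g y → Adjf T g z → Adjf T g w →
      ({x, y, z, w} : Finset Φ).card = 4 → (∀ t ∈ ({x, y, z, w} : Finset Φ), t ∉ S \ {g1, g2, g3}) →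
      ((S \ {g1, g2, g3}) ∩ Nb T g).card ≤ 2 := by
    intro g x y z w hg kx ky kz kw hc4 hdis
    have : ((S \ {g1, g2, g3}) ∩ Nb T g).card + ({x, y, z, w} : Finset Φ).card ≤ (Nb T g).card := by
      rw [← Finset.card_union_of_disjoint]
      · apply Finset.card_le_card
        intro t ht
        rw [Finset.mem_union] at ht
        rcases ht with ht | ht
        · exact (Finset.mem_inter.1 ht).2
        · simp only [Finset.mem_insert, Finset.mem_singleton] at ht
          rw [mem_Nb]
          rcases ht with rfl | rfl | rfl | rfl <;> assumption
      · rw [Finset.disjoint_right]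
        intro t ht ht'
        exact hdis t ht (Finset.mem_inter.1 ht').1
    have := deg6 g hg
    omega
  have cf : ∀ {x y z w : Φ}, x ≠ y → x ≠ z → x ≠ w → y ≠ z → y ≠ w → z ≠ w →
      ({x, y, z, w} : Finset Φ).card = 4 := by
    intro x y z w _ _ _ _ _ _
    rw [Finset.card_insert_of_notMem, Finset.card_insert_of_notMem, Finset.card_pair] <;> simp [*]
  have hab := h.ne _ _ _ h1
  have hbc := h.ne _ _ _ h2
  have hac := h.ne _ _ _ h3
  obtain ⟨ag1, bg1, cg1⟩ := ag g1 hg1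
  obtain ⟨ag2, bg2, cg2⟩ := ag g2 hg2
  obtain ⟨ag3, bg3, cg3⟩ := ag g3 hg3
  have E : ∀ {x y s : Φ}, x ∈ S → y ∈ S → T x y s → s ∉ S \ {g1, g2, g3} →
     (∀ d, T x y d → d ≠ s → d ≠ a ∧ d ≠ b ∧ d ≠ c ∧ d ≠ g1 ∧ d ≠ g2 ∧ d ≠ g3) → 
     ∃ u w, u ∈ S \ {g1, g2, g3} ∧ w ∉ S \ {g1, g2, g3} ∧ T x y u ∧ T x y w := by
    intro x y s hx hy hT hs hh
    obtain ⟨d, d1, d2, -⟩ := h.two x y s hT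
    refine ⟨d, s, ?_, hs, d2, hT⟩
    have := hh d d2 d1
    have := cl x hx d ⟨y, h.s2 _ _ _ d2⟩
    rw [memS]
    tauto
  have gnot : ∀ g, g = g1 ∨ g = g2 ∨ g = g3 ∨ g = a ∨ g = b ∨ g = c → g ∉ S \ {g1, g2, g3} := by
    intro g hg; rw [memS]; grind
  refine ⟨S \ {g1, g2, g3}, ?_, ⟨nTg, by simp, by simp, by simp, ?_, ?_, ?_, ?_⟩, ?_⟩
  · rw [Finset.ssubset_iff_of_subset Finset.sdiff_subset]
    exact ⟨g1, hg1, by simp⟩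
  · intro x hx y hxy
    have h5 := hno x hx
    have h6 := h.adj_symm hxy
    have := cl x ((memS x).1 hx).1 y hxy
    rw [memS]
    grind
  · refine E hg1 hg2 (h.rot t2) (gnot _ (by tauto)) (fun d hT hne => ?_)
    have n1 := h.ne _ _ _ (h.rot hT)
    have n2 := h.ne _ _ _ (h.rot (h.rot hT))
    have k1 : d ≠ a := by rintro rfl; have := mA g2 hg2 ⟨g1, h.swap13 hT⟩; grind
    have k2 : d ≠ c := by rintro rfl; have := mC g1 hg1 ⟨g2, h.rot (h.rot hT)⟩; grind
    have k3 : d ≠ g3 := by rintro rfl; exact nTg hT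
    exact ⟨k1, hne, k2, n2, n1.symm, k3⟩
  · refine E hg2 hg3 (h.rot t3) (gnot _ (by tauto)) (fun d hT hne => ?_)
    have n1 := h.ne _ _ _ (h.rot hT)
    have n2 := h.ne _ _ _ (h.rot (h.rot hT))
    have k1 : d ≠ a := by rintro rfl; have := mA g2 hg2 ⟨g3, h.rot (h.rot hT)⟩; grind
    have k2 : d ≠ b := by rintro rfl; have := mB g3 hg3 ⟨g2, h.swap13 hT⟩; grind
    have k3 : d ≠ g1 := by rintro rfl; exact nTg (h.rot (h.rot hT))
    exact ⟨k1, k2, hne, k3, n2, n1.symm⟩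
  · refine E hg1 hg3 (h.rot t1) (gnot _ (by tauto)) (fun d hT hne => ?_)
    have n1 := h.ne _ _ _ (h.rot hT)
    have n2 := h.ne _ _ _ (h.rot (h.rot hT))
    have k1 : d ≠ c := by rintro rfl; have := mC g1 hg1 ⟨g3, h.rot (h.rot hT)⟩; grind
    have k2 : d ≠ b := by rintro rfl; have := mB g3 hg3 ⟨g1, h.swap13 hT⟩; grind
    have k3 : d ≠ g2 := by rintro rfl; exact nTg (h.s2 _ _ _ hT)
    exact ⟨hne, k2, k1, n2, k3, n1.symm⟩
  · have c1 := cnt (x := a) (y := b) (z := g2) (w := g3) hg1 ⟨b, h.rot (h.rot h1)⟩ ⟨a, h.swap13 h1⟩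
      ⟨b, h.rot t2⟩ ⟨a, h.rot t1⟩ (by apply cf <;> assumption)
      (by intro t ht; apply gnot; simp only [Finset.mem_insert, Finset.mem_singleton] at ht; tauto)
    have c2 := cnt (x := b) (y := c) (z := g1) (w := g3) hg2 ⟨c, h.rot (h.rot h2)⟩ ⟨b, h.swap13 h2⟩
      ⟨b, h.swap13 t2⟩ ⟨c, h.rot t3⟩ (by apply cf <;> assumption)
      (by intro t ht; apply gnot; simp only [Finset.mem_insert, Finset.mem_singleton] at ht; tauto)
    have c3 := cnt (x := a) (y := c) (z := g1) (w := g2) hg3 ⟨c, h.rot (h.rot h3)⟩ ⟨a, h.swap13 h3⟩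
      ⟨a, h.swap13 t1⟩ ⟨c, h.swap13 t3⟩ (by apply cf <;> assumption)
      (by intro t ht; apply gnot; simp only [Finset.mem_insert, Finset.mem_singleton] at ht; tauto)
    unfold len
    omega

open Classical in
theorem Surf.descent (h : Surf T) (hd : ∀ x, 4 ≤ (Nb T x).card ∧ (Nb T x).card ≤ 7)
    (h4 : (Finset.univ.filter (fun x => (Nb T x).card = 4)).card ≤ 2) (S : Finset Φ) :
    ∀ a b c : Φ, Side T a b c S → len T a b c S + q7 T S ≤ 6 → False := by
  induction S using Finset.strongInduction with
  | H S ih =>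
    intro a b c s hl
    obtain ⟨g1, w1, m1, -, h1, -⟩ := s.eab
    obtain ⟨g2, w2, m2, -, h2, -⟩ := s.ebc
    obtain ⟨g3, w3, m3, -, h3, -⟩ := s.eac
    by_cases n12 : g1 = g2
    · subst n12
      obtain ⟨S', hS, s', hl'⟩ := h.step1 hd s m1 h1 h2
      exact ih S' hS _ _ _ s' (hl'.trans hl)
    by_cases n13 : g1 = g3
    · subst n13
      obtain ⟨S', hS, s', hl'⟩ := h.step1 hd (s.swap12 h) m1 (h.s1 _ _ _ h1) h3
      refine ih S' hS _ _ _ s' (hl'.trans ?_)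
      unfold len at *; omega
    by_cases n23 : g2 = g3
    · subst n23
      obtain ⟨S', hS, s', hl'⟩ := h.step1 hd (s.swap23 h) m2 h3 (h.s1 _ _ _ h2)
      refine ih S' hS _ _ _ s' (hl'.trans ?_)
      unfold len at *; omega
    obtain ⟨S', hS, s', hl'⟩ := h.step2 hd h4 s m1 m2 m3 h1 h2 h3 n12 n13 n23 hl
    exact ih S' hS _ _ _ s' hl'

open Classical in
theorem Surf.main (h : Surf T) (hd : ∀ x, 4 ≤ (Nb T x).card ∧ (Nb T x).card ≤ 7)
    (h4 : (Finset.univ.filter (fun x => (Nb T x).card = 4)).card ≤ 2)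
    (h7 : (Finset.univ.filter (fun x => (Nb T x).card = 7)).card ≤ 1)
    (a b c : Φ) (S S' : Finset Φ) (s : Side T a b c S) (s' : Side T a b c S')
    (hdis : Disjoint S S') : False := by
  obtain ⟨u1, w1, -, -, h1, -⟩ := s.eab
  obtain ⟨u2, w2, -, -, h2, -⟩ := s.ebc
  obtain ⟨u3, w3, -, -, h3, -⟩ := s.eac
  have hab := h.ne _ _ _ h1
  have hbc := h.ne _ _ _ h2
  have hac := h.ne _ _ _ h3
  have key : ∀ {x y z : Φ}, Adjf T x y → Adjf T x z → y ≠ z → y ∉ S → y ∉ S' → z ∉ S → z ∉ S' →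
      (S ∩ Nb T x).card + (S' ∩ Nb T x).card + 2 ≤ (Nb T x).card := by
    intro x y z k1 k2 hne m1 m2 m3 m4
    rw [← Finset.card_pair hne, ← Finset.card_union_of_disjoint, ← Finset.card_union_of_disjoint]
    · apply Finset.card_le_card
      intro t ht
      simp only [Finset.mem_union, Finset.mem_inter, Finset.mem_insert, Finset.mem_singleton] at ht
      rcases ht with (ht | ht) | rfl | rfl
      · exact ht.2
      · exact ht.2
      · exact mem_Nb.2 k1
      · exact mem_Nb.2 k2
    · rw [Finset.disjoint_right]
      intro t ht ht'
      simp only [Finset.mem_union, Finset.mem_inter, Finset.mem_insert, Finset.mem_singleton] at ht ht'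
      grind
    · exact hdis.mono Finset.inter_subset_left Finset.inter_subset_left
  have ka := key ⟨_, h1⟩ ⟨_, h3⟩ hbc s.hb s'.hb s.hc s'.hc
  have kb := key ⟨_, h.s1 _ _ _ h1⟩ ⟨_, h2⟩ hac s.ha s'.ha s.hc s'.hc
  have kc := key ⟨_, h.s1 _ _ _ h3⟩ ⟨_, h.s1 _ _ _ h2⟩ hab s.ha s'.ha s.hb s'.hb
  have kq : q7 T {a, b, c} + q7 T S + q7 T S' ≤ 1 := by
    refine le_trans ?_ h7
    unfold q7
    rw [← Finset.card_union_of_disjoint, ← Finset.card_union_of_disjoint]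
    · apply Finset.card_le_card
      rw [← Finset.filter_union, ← Finset.filter_union]
      exact Finset.filter_subset_filter _ (Finset.subset_univ _)
    · rw [← Finset.filter_union]
      apply Finset.disjoint_filter_filter
      rw [Finset.disjoint_left]
      intro t ht ht'
      have := s.ha; have := s.hb; have := s.hc; have := s'.ha; have := s'.hb; have := s'.hc
      have hd' : t ∈ S → t ∉ S' := fun k => Finset.disjoint_left.1 hdis k
      simp only [Finset.mem_union, Finset.mem_insert, Finset.mem_singleton] at ht ht'
      grind
    · apply Finset.disjoint_filter_filter
      rw [Finset.disjoint_left]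
      intro t ht ht'
      have := s.ha; have := s.hb; have := s.hc
      simp only [Finset.mem_insert, Finset.mem_singleton] at ht
      grind
  have kabc : (Nb T a).card + (Nb T b).card + (Nb T c).card ≤ 18 + q7 T {a, b, c} := by
    have e : q7 T {a, b, c} = (if (Nb T a).card = 7 then 1 else 0) + ((if (Nb T b).card = 7 then 1 else 0)
        + (if (Nb T c).card = 7 then 1 else 0)) := by
      unfold q7
      rw [Finset.card_filter, Finset.sum_insert, Finset.sum_pair hbc]
      simp [hab, hac]
    have := hd a; have := hd b; have := hd c
    rw [e]
    split_ifs <;> omega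
  rcases Nat.lt_or_ge 6 (len T a b c S + q7 T S) with hlt | hle
  · apply h.descent hd h4 S' a b c s'
    unfold len at *
    omega
  · exact h.descent hd h4 S a b c s hle

end Comb

section Geom
variable {P : Set E3}

/-- supporting functional of a facet -/
def Supp (P F : Set E3) (f : E3 →L[ℝ] ℝ) (c : ℝ) : Prop :=
  f ≠ 0 ∧ (∀ x ∈ P, f x ≤ c) ∧ ∀ x ∈ P, (f x = c ↔ x ∈ F)

theorem IsPolytope.compact (hP : IsPolytope P) : IsCompact P := by
  obtain ⟨V, rfl⟩ := hP
  exact V.finite_toSet.isCompact_convexHull ℝ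

theorem IsPolytope.convex (hP : IsPolytope P) : Convex ℝ P := by
  obtain ⟨V, rfl⟩ := hP
  exact convex_convexHull ℝ _

theorem IsFaceOf.compact (hP : IsPolytope P) {A : Set E3} (hA : IsFaceOf A P) : IsCompact A :=
  hP.compact.of_isClosed_subset hA.2.1 hA.2.2.2.1

theorem face_eq_hull {V : Finset E3} (hV : P = convexHull ℝ (V : Set E3)) {A : Set E3}
    (hA : IsFaceOf A P) : A = convexHull ℝ ((V : Set E3) ∩ A) := by
  have hP : IsPolytope P := ⟨V, hV⟩
  apply subset_antisymm
  · have h1 := closure_convexHull_extremePoints (hA.compact hP) hA.2.2.1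
    have h2 : A.extremePoints ℝ ⊆ (V : Set E3) ∩ A := by
      intro x hx
      refine ⟨?_, extremePoints_subset hx⟩
      have := hA.2.2.2.extremePoints_subset_extremePoints hx
      rw [hV] at this
      exact extremePoints_convexHull_subset this
    have h3 : IsClosed (convexHull ℝ ((V : Set E3) ∩ A)) :=
      (V.finite_toSet.inter_of_left A).isClosed_convexHull ℝ
    calc A = closure (convexHull ℝ (A.extremePoints ℝ)) := h1.symm
      _ ⊆ _ := closure_minimal (convexHull_mono h2) h3
  · exact convexHull_min inter_subset_right hA.2.2.1

theorem faces_finite (hP : IsPolytope P) : {A | IsFaceOf A P}.Finite := by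
  obtain ⟨V, hV⟩ := hP
  have : (Set.powerset (V : Set E3)).Finite := V.finite_toSet.powerset
  refine (this.image (fun W => convexHull ℝ W)).subset ?_
  intro A hA
  exact ⟨(V : Set E3) ∩ A, inter_subset_left, (face_eq_hull hV hA).symm⟩

theorem relint_extend {A : Set E3} {z p : E3} (hz : z ∈ intrinsicInterior ℝ A)
    (hp : p ∈ affineSpan ℝ A) : ∃ t : ℝ, 0 < t ∧ z + t • (z - p) ∈ A := by
  obtain ⟨y, hy, rfl⟩ := mem_intrinsicInterior.1 hz
  let γ : ℝ → affineSpan ℝ A := fun t => ⟨AffineMap.lineMap (y : E3) p (-t),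
    AffineMap.lineMap_mem _ y.2 hp⟩
  have hγ : Continuous γ := by
    apply Continuous.subtype_mk
    exact (AffineMap.lineMap_continuous).comp continuous_neg
  have h0 : γ 0 = y := by
    apply Subtype.ext; simp [γ]
  have h1 : ∀ᶠ t in nhds (0 : ℝ), γ t ∈ interior ((↑) ⁻¹' A : Set (affineSpan ℝ A)) := by
    apply hγ.continuousAt.eventually_mem
    rw [h0]
    exact isOpen_interior.mem_nhds hy
  have h2 : ∀ᶠ t in nhdsWithin (0 : ℝ) (Ioi 0), γ t ∈ interior ((↑) ⁻¹' A : Set (affineSpan ℝ A)) :=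
    h1.filter_mono nhdsWithin_le_nhds
  obtain ⟨t, ht, ht0⟩ := (h2.and self_mem_nhdsWithin).exists
  refine ⟨t, ht0, ?_⟩
  have := interior_subset ht
  have h3 : AffineMap.lineMap (y : E3) p (-t) ∈ A := this
  rw [AffineMap.lineMap_apply_module'] at h3
  convert h3 using 1
  module

theorem mem_openSeg {z p : E3} {t : ℝ} (ht : 0 < t) : z ∈ openSegment ℝ p (z + t • (z - p)) := by
  refine ⟨t / (1 + t), 1 / (1 + t), by positivity, by positivity, by field_simp; ring, ?_⟩
  have h : (1 + t) ≠ 0 := by positivity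
  have : z = (1 + t)⁻¹ • ((1 + t) • z) := by rw [smul_smul, inv_mul_cancel₀ h, one_smul]
  rw [div_eq_inv_mul, div_eq_inv_mul, ← smul_smul, ← smul_smul, ← smul_add]
  conv_rhs => rw [this]
  congr 1
  module

theorem ext_left {A B : Set E3} (h : IsExtreme ℝ A B) {x y z : E3} (hx : x ∈ A) (hy : y ∈ A)
    (hz : z ∈ B) (hs : z ∈ openSegment ℝ x y) : x ∈ B :=
  h.2 hx hy hz hs

theorem relint_subset {A B : Set E3} (hAP : A ⊆ P) (hB : IsExtreme ℝ P B) {z : E3}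
    (hz : z ∈ intrinsicInterior ℝ A) (hzB : z ∈ B) : A ⊆ B := by
  intro p hp
  obtain ⟨t, ht, h⟩ := relint_extend hz (subset_affineSpan ℝ A hp)
  exact ext_left hB (hAP hp) (hAP h) hzB (mem_openSeg ht)

theorem face_of_affineSpan {A : Set E3} (hA : IsFaceOf A P) {p : E3} (hp : p ∈ P)
    (hpA : p ∈ affineSpan ℝ A) : p ∈ A := by
  obtain ⟨z, hz⟩ := hA.1.intrinsicInterior hA.2.2.1
  obtain ⟨t, ht, h⟩ := relint_extend hz hpA
  exact ext_left hA.2.2.2 hp (hA.2.2.2.1 h) (intrinsicInterior_subset hz) (mem_openSeg ht)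

theorem mem_affineSpan_of_sub {A : Set E3} {z p : E3} (hz : z ∈ A)
    (h : p - z ∈ vectorSpan ℝ A) : p ∈ affineSpan ℝ A := by
  have := AffineSubspace.vadd_mem_of_mem_direction (s := affineSpan ℝ A)
    (by rwa [direction_affineSpan]) (subset_affineSpan ℝ A hz)
  simpa using this

theorem sub_mem_vectorSpan {A : Set E3} {z p : E3} (hp : p ∈ A) (hz : z ∈ A) :
    p - z ∈ vectorSpan ℝ A := by
  simpa using vsub_mem_vectorSpan ℝ hp hz

theorem face_eq_of_dim {A B : Set E3} (hA : IsFaceOf A P) (hB : IsFaceOf B P) (h : A ⊆ B)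
    (hd : setDim A = setDim B) : A = B := by
  refine subset_antisymm h fun p hp => ?_
  obtain ⟨z, hz⟩ := hA.1
  have : vectorSpan ℝ A = vectorSpan ℝ B :=
    Submodule.eq_of_le_of_finrank_eq (vectorSpan_mono ℝ h) hd
  refine face_of_affineSpan hA (hB.2.2.2.1 hp) (mem_affineSpan_of_sub hz ?_)
  rw [this]
  exact sub_mem_vectorSpan hp (h hz)

theorem face_inter {A B : Set E3} (hA : IsFaceOf A P) (hB : IsFaceOf B P) (h : (A ∩ B).Nonempty) :
    IsFaceOf (A ∩ B) P :=
  ⟨h, hA.2.1.inter hB.2.1, hA.2.2.1.inter hB.2.2.1, hA.2.2.2.inter hB.2.2.2⟩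

theorem face_vertex (hP : IsPolytope P) {A : Set E3} (hA : IsFaceOf A P) :
    ∃ v ∈ A, IsVertexOf v P := by
  obtain ⟨v, hv⟩ := (hA.compact hP).extremePoints_nonempty hA.1
  refine ⟨v, extremePoints_subset hv, singleton_nonempty _, isClosed_singleton,
    convex_singleton _, ?_⟩
  rw [isExtreme_singleton]
  exact hA.2.2.2.extremePoints_subset_extremePoints hv

theorem interior_nonempty_of_dim (hP : IsPolytope P) (h3 : setDim P = 3) :
    (interior P).Nonempty := by
  have hne : P.Nonempty := by
    by_contra h
    rw [not_nonempty_iff_eq_empty] at h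
    subst h
    rw [setDim, vectorSpan_empty] at h3
    simp at h3
  rw [hP.convex.interior_nonempty_iff_affineSpan_eq_top,
    AffineSubspace.affineSpan_eq_top_iff_vectorSpan_eq_top_of_nonempty ℝ _ _ hne]
  apply Submodule.eq_top_of_finrank_eq
  rw [show Module.finrank ℝ (vectorSpan ℝ P) = 3 from h3]
  simp

theorem finrank_ker3 {f : E3 →L[ℝ] ℝ} (hf : f ≠ 0) :
    Module.finrank ℝ (LinearMap.ker (f : E3 →ₗ[ℝ] ℝ)) = 2 := by
  have h1 := LinearMap.finrank_range_add_finrank_ker (f : E3 →ₗ[ℝ] ℝ)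
  have h2 : LinearMap.range (f : E3 →ₗ[ℝ] ℝ) = ⊤ := by
    apply LinearMap.range_eq_top.2
    apply LinearMap.surjective
    intro h
    apply hf
    ext x
    exact congrArg (fun g : E3 →ₗ[ℝ] ℝ => g x) h
  rw [h2] at h1
  simp at h1
  omega

theorem support_at (hP : IsPolytope P) (h3 : setDim P = 3) {z : E3} (hz : z ∉ interior P) :
    ∃ f : E3 →L[ℝ] ℝ, f ≠ 0 ∧ (∀ x ∈ P, f x ≤ f z) ∧ ∀ x ∈ interior P, f x < f z := by
  obtain ⟨f, hf⟩ := geometric_hahn_banach_open_point hP.convex.interior isOpen_interior hz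
  have hi := interior_nonempty_of_dim hP h3
  refine ⟨f, ?_, ?_, hf⟩
  · rintro rfl
    obtain ⟨y, hy⟩ := hi
    simpa using hf y hy
  · intro x hx
    have : x ∈ closure (interior P) := by
      rw [hP.convex.closure_interior_eq_closure_of_nonempty_interior hi]
      exact subset_closure hx
    exact closure_minimal (fun y hy => (hf y hy).le)
      (isClosed_le f.continuous continuous_const) this

theorem facet_supp (hP : IsPolytope P) (h3 : setDim P = 3) {F : Set E3} (hF : IsFacetOf F P) :
    ∃ f c, Supp P F f c := by
  obtain ⟨hF, hd⟩ := hF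
  obtain ⟨z, hz⟩ := hF.1.intrinsicInterior hF.2.2.1
  have hzF := intrinsicInterior_subset hz
  have hzi : z ∉ interior P := by
    intro hi
    have := relint_subset (subset_refl P) hF.2.2.2 (interior_subset_intrinsicInterior hi) hzF
    have : F = P := subset_antisymm hF.2.2.2.1 this
    rw [this] at hd
    omega
  obtain ⟨f, hf0, hf, -⟩ := support_at hP h3 hzi
  have hFc : ∀ x ∈ F, f x = f z := by
    intro x hx
    apply le_antisymm (hf x (hF.2.2.2.1 hx))
    obtain ⟨t, ht, h⟩ := relint_extend hz (subset_affineSpan ℝ F hx)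
    have := hf _ (hF.2.2.2.1 h)
    simp only [map_add, map_smul, map_sub, smul_eq_mul] at this
    nlinarith
  refine ⟨f, f z, hf0, hf, fun x hx => ⟨fun hfx => ?_, hFc x⟩⟩
  apply face_of_affineSpan hF hx
  apply mem_affineSpan_of_sub hzF
  have hle : vectorSpan ℝ F ≤ LinearMap.ker (f : E3 →ₗ[ℝ] ℝ) := by
    rw [vectorSpan_eq_span_vsub_set_right ℝ hzF, Submodule.span_le]
    rintro _ ⟨y, hy, rfl⟩
    simp [hFc y hy]
  have := Submodule.eq_of_le_of_finrank_eq hle (by rw [finrank_ker3 hf0]; exact hd)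
  rw [this]
  simp [hfx]

theorem hrep (hP : IsPolytope P) (h3 : setDim P = 3) {x : E3} (hx : x ∉ P) :
    ∃ F, IsFacetOf F P ∧ ∀ f c, Supp P F f c → c < f x := by
  classical
  have hi := interior_nonempty_of_dim hP h3
  have hPc := hP.compact.isClosed
  have hP' := hP
  obtain ⟨V, hV⟩ := hP
  -- a generic interior point
  let Bad : Set E3 := ⋃ W ∈ {W : Set E3 | W ⊆ (V : Set E3) ∧ Module.finrank ℝ (vectorSpan ℝ W) ≤ 1},
    (affineSpan ℝ (insert x W) : Set E3)
  have hfin : {W : Set E3 | W ⊆ (V : Set E3) ∧ Module.finrank ℝ (vectorSpan ℝ W) ≤ 1}.Finite :=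
    V.finite_toSet.powerset.subset (fun W hW => hW.1)
  have hBad : MeasureTheory.volume Bad = 0 := by
    rw [MeasureTheory.measure_biUnion_null_iff hfin.countable]
    intro W hW
    apply MeasureTheory.Measure.addHaar_affineSubspace
    intro htop
    have h1 := finrank_vectorSpan_insert_le_set ℝ W x
    have h2 : vectorSpan ℝ (insert x W) = ⊤ := by
      rw [← direction_affineSpan, htop, AffineSubspace.direction_top]
    rw [h2] at h1
    have h4 : Module.finrank ℝ (⊤ : Submodule ℝ E3) = 3 := by simp
    have := hW.2
    omega
  obtain ⟨y, hyi, hyB⟩ : ∃ y ∈ interior P, y ∉ Bad := by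
    by_contra hcon
    push Not at hcon
    have h1 : MeasureTheory.volume (interior P) = 0 := MeasureTheory.measure_mono_null hcon hBad
    exact (isOpen_interior.measure_pos MeasureTheory.volume hi).ne' h1
  have hyP := interior_subset hyi
  obtain ⟨z, hzs, hzf⟩ : (segment ℝ y x ∩ (P \ interior P)).Nonempty := by
    by_contra hcon
    rw [not_nonempty_iff_eq_empty] at hcon
    have := (convex_segment y x).isPreconnected (interior P) Pᶜ isOpen_interior hPc.isOpen_compl
      (by
        intro w hw
        by_contra hw'
        simp only [mem_union, mem_compl_iff] at hw'
        have : w ∈ segment ℝ y x ∩ (P \ interior P) := ⟨hw, by tauto, by tauto⟩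
        rw [hcon] at this
        exact this)
      ⟨y, left_mem_segment ℝ y x, hyi⟩ ⟨x, right_mem_segment ℝ y x, hx⟩
    obtain ⟨w, -, hw1, hw2⟩ := this
    exact hw2 (interior_subset hw1)
  obtain ⟨hzP, hzi⟩ := hzf
  obtain ⟨f, hf0, hf, hfi⟩ := support_at hP' h3 hzi
  let F := P ∩ {p | f p = f z}
  have hface : IsFaceOf F P := by
    refine ⟨⟨z, hzP, rfl⟩, hPc.inter (isClosed_eq f.continuous continuous_const),
      hP'.convex.inter ?_, inter_subset_left, ?_⟩
    · exact convex_hyperplane f.isLinear _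
    · rintro a ha b hb w ⟨hw, hw'⟩ ⟨s, t, hs, ht, hst, rfl⟩
      refine ⟨ha, ?_⟩
      have h1 := hf a ha
      have h2 := hf b hb
      simp only [mem_ofPred_eq, map_add, map_smul, smul_eq_mul] at hw' ⊢
      have : t = 1 - s := by linarith
      subst this
      nlinarith
  obtain ⟨s, hs, rfl⟩ : ∃ s ∈ Icc (0 : ℝ) 1, AffineMap.lineMap y x s = z := by
    rw [segment_eq_image_lineMap] at hzs; exact hzs
  rw [AffineMap.lineMap_apply_module'] at *
  have hs0 : s ≠ 0 := by rintro rfl; apply hzi; simpa using hyi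
  have hs1 : s ≠ 1 := by rintro rfl; apply hx; simpa using hzP
  have hspos : 0 < s := lt_of_le_of_ne hs.1 (Ne.symm hs0)
  have hslt : s < 1 := lt_of_le_of_ne hs.2 hs1
  have hdim : setDim F = 2 := by
    apply le_antisymm
    · have hle : vectorSpan ℝ F ≤ LinearMap.ker (f : E3 →ₗ[ℝ] ℝ) := by
        rw [vectorSpan_eq_span_vsub_set_right ℝ (show s • (x - y) + y ∈ F from ⟨hzP, rfl⟩), Submodule.span_le]
        rintro _ ⟨w, hw, rfl⟩
        have := hw.2
        simp only [mem_ofPred_eq] at this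
        simp only [SetLike.mem_coe, LinearMap.mem_ker, vsub_eq_sub, map_sub]
        exact sub_eq_zero.2 this
      have := Submodule.finrank_mono hle
      rw [finrank_ker3 hf0] at this
      exact this
    · by_contra hcon
      apply hyB
      have hhull := face_eq_hull hV hface
      have hzW : s • (x - y) + y ∈ affineSpan ℝ ((V : Set E3) ∩ F) := by
        apply convexHull_subset_affineSpan
        rw [← hhull]
        exact ⟨hzP, rfl⟩
      refine mem_biUnion (x := (V : Set E3) ∩ F) ⟨inter_subset_left, ?_⟩ ?_
      · have := Submodule.finrank_mono (vectorSpan_mono ℝ (inter_subset_right : (V : Set E3) ∩ F ⊆ F))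
        unfold setDim at hcon
        omega
      · have h1 := affineSpan_mono ℝ (subset_insert x ((V : Set E3) ∩ F)) hzW
        have h2 : x ∈ affineSpan ℝ (insert x ((V : Set E3) ∩ F)) :=
          subset_affineSpan ℝ _ (mem_insert _ _)
        have h4 := AffineMap.lineMap_mem (1 / (1 - s)) h2 h1
        rw [AffineMap.lineMap_apply_module'] at h4
        have h5 : (1 - s) ≠ 0 := by linarith
        have : s • (x - y) + y - x = (1 - s) • (y - x) := by module
        rw [this, smul_smul, one_div, inv_mul_cancel₀ h5, one_smul, sub_add_cancel] at h4
        exact h4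
  refine ⟨F, ⟨hface, hdim⟩, fun g c hg => ?_⟩
  have h1 : g (s • (x - y) + y) = c := (hg.2.2 _ hzP).2 ⟨hzP, rfl⟩
  have h2 : g y < c := by
    refine lt_of_le_of_ne (hg.2.1 y hyP) fun h => ?_
    have := ((hg.2.2 y hyP).1 h).2
    exact (hfi y hyi).ne this
  simp only [map_add, map_smul, map_sub, smul_eq_mul] at h1
  by_contra hcon
  push Not at hcon
  nlinarith

end Geom

section Geom2
variable {P : Set E3} {f : Set E3 → E3 →L[ℝ] ℝ} {c : Set E3 → ℝ}

/-- A simple polytope with chosen supporting functionals of facets. -/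
structure Ctx (P : Set E3) (f : Set E3 → E3 →L[ℝ] ℝ) (c : Set E3 → ℝ) : Prop where
  poly : IsPolytope P
  dim : setDim P = 3
  simple : ∀ v : E3, IsVertexOf v P → {F | IsFacetOf F P ∧ v ∈ F}.ncard = 3
  supp : ∀ F, IsFacetOf F P → Supp P F (f F) (c F)
  rep : ∀ x, (∀ F, IsFacetOf F P → f F x ≤ c F) → x ∈ P

theorem exists_ctx (hP : IsSimplePolytope3 P) : ∃ f c, Ctx P f c := by
  classical
  obtain ⟨h1, h2, h3⟩ := hP
  have : ∀ F : Set E3, ∃ fc : (E3 →L[ℝ] ℝ) × ℝ, IsFacetOf F P → Supp P F fc.1 fc.2 := by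
    intro F
    by_cases hF : IsFacetOf F P
    · obtain ⟨g, c, h⟩ := facet_supp h1 h2 hF
      exact ⟨(g, c), fun _ => h⟩
    · exact ⟨(0, 0), fun h => absurd h hF⟩
  choose fc hfc using this
  refine ⟨fun F => (fc F).1, fun F => (fc F).2, h1, h2, h3, hfc, ?_⟩
  intro x hx
  by_contra hxP
  obtain ⟨F, hF, hF'⟩ := hrep h1 h2 hxP
  have := hF' _ _ (hfc F hF)
  have := hx F hF
  linarith

theorem facet_sub {F : Set E3} (hF : IsFacetOf F P) : F ⊆ P := hF.1.2.2.2.1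

theorem Ctx.on (h : Ctx P f c) {F : Set E3} (hF : IsFacetOf F P) {x : E3} (hx : x ∈ F) :
    f F x = c F := ((h.supp F hF).2.2 x (facet_sub hF hx)).2 hx

theorem Ctx.le (h : Ctx P f c) {F : Set E3} (hF : IsFacetOf F P) {x : E3} (hx : x ∈ P) :
    f F x ≤ c F := (h.supp F hF).2.1 x hx

theorem Ctx.mem (h : Ctx P f c) {F : Set E3} (hF : IsFacetOf F P) {x : E3} (hx : x ∈ P)
    (e : f F x = c F) : x ∈ F := ((h.supp F hF).2.2 x hx).1 e

theorem Ctx.lt (h : Ctx P f c) {F : Set E3} (hF : IsFacetOf F P) {x : E3} (hx : x ∈ P)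
    (hn : x ∉ F) : f F x < c F :=
  lt_of_le_of_ne (h.le hF hx) fun e => hn (h.mem hF hx e)

theorem Ctx.fin (h : Ctx P f c) : {F | IsFacetOf F P}.Finite :=
  (faces_finite h.poly).subset fun _ hF => hF.1

open Filter in
theorem Ctx.move_ev (h : Ctx P f c) {x d : E3} (hx : x ∈ P)
    (hd : ∀ F, IsFacetOf F P → x ∈ F → f F d ≤ 0) :
    ∀ᶠ t in nhdsWithin (0 : ℝ) (Ioi 0), x + t • d ∈ P := by
  have : ∀ᶠ t in nhdsWithin (0 : ℝ) (Ioi 0), ∀ F ∈ {F | IsFacetOf F P}, f F (x + t • d) ≤ c F := by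
    rw [Filter.eventually_all_finite h.fin]
    intro F hF
    by_cases hxF : x ∈ F
    · filter_upwards [self_mem_nhdsWithin] with t ht
      have h1 := h.on hF hxF
      have h2 := hd F hF hxF
      simp only [map_add, map_smul, smul_eq_mul, mem_Ioi] at ht ⊢
      nlinarith
    · have h1 := h.lt hF hx hxF
      have hc : Continuous fun t : ℝ => f F (x + t • d) := by fun_prop
      have : ∀ᶠ t in nhds (0 : ℝ), f F (x + t • d) < c F := by
        apply hc.continuousAt.eventually_lt continuousAt_const
        simpa using h1
      exact (this.filter_mono nhdsWithin_le_nhds).mono fun t ht => ht.le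
  exact this.mono fun t ht => h.rep _ ht

theorem Ctx.move (h : Ctx P f c) {x d : E3} (hx : x ∈ P)
    (hd : ∀ F, IsFacetOf F P → x ∈ F → f F d ≤ 0) : ∃ t : ℝ, 0 < t ∧ x + t • d ∈ P := by
  obtain ⟨t, ht, ht0⟩ := ((h.move_ev hx hd).and self_mem_nhdsWithin).exists
  exact ⟨t, ht0, ht⟩

theorem Ctx.dir (h : Ctx P f c) {A : Set E3} (hA : IsFaceOf A P) {x d : E3} (hx : x ∈ A)
    (hd : ∀ F, IsFacetOf F P → x ∈ F → f F d = 0) : d ∈ vectorSpan ℝ A := by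
  have hxP := hA.2.2.2.1 hx
  have h1 := h.move_ev (d := d) hxP fun F hF hxF => (hd F hF hxF).le
  have h2 := h.move_ev (d := -d) hxP fun F hF hxF => by simp [hd F hF hxF]
  obtain ⟨t, ⟨ht1, ht2⟩, ht0⟩ := ((h1.and h2).and self_mem_nhdsWithin).exists
  have ht0 : 0 < t := ht0
  have h3 : x + t • d ∈ A := by
    refine ext_left hA.2.2.2 ht1 ht2 hx ⟨1/2, 1/2, by norm_num, by norm_num, by norm_num, ?_⟩
    module
  have h4 := sub_mem_vectorSpan h3 hx
  rw [add_sub_cancel_left] at h4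
  have := Submodule.smul_mem _ t⁻¹ h4
  rwa [smul_smul, inv_mul_cancel₀ ht0.ne', one_smul] at this

/-- Local coordinates at a vertex. -/
structure Loc (P : Set E3) (f : Set E3 → E3 →L[ℝ] ℝ) (v : E3) (F G K : Set E3) (d1 d2 d3 : E3) :
    Prop where
  hF : IsFacetOf F P
  hG : IsFacetOf G P
  hK : IsFacetOf K P
  vF : v ∈ F
  vG : v ∈ G
  vK : v ∈ K
  FG : F ≠ G
  FK : F ≠ K
  GK : G ≠ K
  only : ∀ H, IsFacetOf H P → v ∈ H → H = F ∨ H = G ∨ H = K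
  F1 : f F d1 = -1
  F2 : f F d2 = 0
  F3 : f F d3 = 0
  G1 : f G d1 = 0
  G2 : f G d2 = -1
  G3 : f G d3 = 0
  K1 : f K d1 = 0
  K2 : f K d2 = 0
  K3 : f K d3 = -1
  dec : ∀ w, w = -(f F w) • d1 + -(f G w) • d2 + -(f K w) • d3

theorem Loc.rot {v F G K d1 d2 d3} (l : Loc P f v F G K d1 d2 d3) : Loc P f v G K F d2 d3 d1 := by
  obtain ⟨a1, a2, a3, a4, a5, a6, a7, a8, a9, b, c1, c2, c3, c4, c5, c6, c7, c8, c9, d⟩ := l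
  refine ⟨a2, a3, a1, a5, a6, a4, a9, a7.symm, a8.symm, ?_, c5, c6, c4, c8, c9, c7, c2, c3, c1, ?_⟩
  · intro H h1 h2; have := b H h1 h2; tauto
  · intro w; conv_lhs => rw [d w]
    abel

theorem Loc.swap {v F G K d1 d2 d3} (l : Loc P f v F G K d1 d2 d3) : Loc P f v G F K d2 d1 d3 := by
  obtain ⟨a1, a2, a3, a4, a5, a6, a7, a8, a9, b, c1, c2, c3, c4, c5, c6, c7, c8, c9, d⟩ := l
  refine ⟨a2, a1, a3, a5, a4, a6, a7.symm, a9, a8, ?_, c5, c4, c6, c2, c1, c3, c8, c7, c9, ?_⟩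
  · intro H h1 h2; have := b H h1 h2; tauto
  · intro w; conv_lhs => rw [d w]
    abel

theorem Ctx.loc (h : Ctx P f c) {v : E3} (hv : IsVertexOf v P) :
    ∃ F G K d1 d2 d3, Loc P f v F G K d1 d2 d3 := by
  obtain ⟨F, G, K, FG, FK, GK, hs⟩ := Set.ncard_eq_three.1 (h.simple v hv)
  have hm : ∀ H, (IsFacetOf H P ∧ v ∈ H) ↔ (H = F ∨ H = G ∨ H = K) := by
    intro H
    have : H ∈ {F | IsFacetOf F P ∧ v ∈ F} ↔ H ∈ ({F, G, K} : Set (Set E3)) := by rw [hs]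
    simpa using this
  obtain ⟨hF, vF⟩ := (hm F).2 (by tauto)
  obtain ⟨hG, vG⟩ := (hm G).2 (by tauto)
  obtain ⟨hK, vK⟩ := (hm K).2 (by tauto)
  have only : ∀ H, IsFacetOf H P → v ∈ H → H = F ∨ H = G ∨ H = K := fun H h1 h2 => (hm H).1 ⟨h1, h2⟩
  have zero : ∀ d, f F d = 0 → f G d = 0 → f K d = 0 → d = 0 := by
    intro d h1 h2 h3
    have := h.dir hv (x := v) (d := d) rfl (fun H hH hvH => by
      rcases only H hH hvH with rfl | rfl | rfl <;> assumption)
    rw [vectorSpan_singleton] at this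
    simpa using this
  let L : E3 →ₗ[ℝ] (Fin 3 → ℝ) := LinearMap.pi ![(f F : E3 →ₗ[ℝ] ℝ), f G, f K]
  have hL : ∀ w, L w = ![f F w, f G w, f K w] := by
    intro w; ext i; fin_cases i <;> simp [L]
  have inj : Function.Injective L := by
    rw [injective_iff_map_eq_zero]
    intro w hw
    rw [hL] at hw
    exact zero w (by simpa using congrFun hw 0) (by simpa using congrFun hw 1)
      (by simpa using congrFun hw 2)
  have surj : Function.Surjective L := by
    rwa [← LinearMap.injective_iff_surjective_of_finrank_eq_finrank]
    simp
  obtain ⟨d1, e1⟩ := surj ![-1, 0, 0]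
  obtain ⟨d2, e2⟩ := surj ![0, -1, 0]
  obtain ⟨d3, e3⟩ := surj ![0, 0, -1]
  rw [hL] at e1 e2 e3
  have F1 : f F d1 = -1 := by simpa using congrFun e1 0
  have F2 : f F d2 = 0 := by simpa using congrFun e2 0
  have F3 : f F d3 = 0 := by simpa using congrFun e3 0
  have G1 : f G d1 = 0 := by simpa using congrFun e1 1
  have G2 : f G d2 = -1 := by simpa using congrFun e2 1
  have G3 : f G d3 = 0 := by simpa using congrFun e3 1
  have K1 : f K d1 = 0 := by simpa using congrFun e1 2
  have K2 : f K d2 = 0 := by simpa using congrFun e2 2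
  have K3 : f K d3 = -1 := by simpa using congrFun e3 2
  refine ⟨F, G, K, d1, d2, d3, hF, hG, hK, vF, vG, vK, FG, FK, GK, only, F1, F2, F3, G1, G2, G3,
    K1, K2, K3, fun w => ?_⟩
  rw [← sub_eq_zero]
  apply zero <;> simp [F1, F2, F3, G1, G2, G3, K1, K2, K3]

theorem Ctx.loc2 (h : Ctx P f c) {v : E3} (hv : IsVertexOf v P) {F G : Set E3}
    (hF : IsFacetOf F P) (hG : IsFacetOf G P) (vF : v ∈ F) (vG : v ∈ G) (hne : F ≠ G) :
    ∃ K d1 d2 d3, Loc P f v F G K d1 d2 d3 := by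
  obtain ⟨A, B, C, d1, d2, d3, l⟩ := h.loc hv
  rcases l.only F hF vF with rfl | rfl | rfl <;> rcases l.only G hG vG with rfl | rfl | rfl
  · exact absurd rfl hne
  · exact ⟨_, _, _, _, l⟩
  · exact ⟨_, _, _, _, l.rot.rot.swap⟩
  · exact ⟨_, _, _, _, l.swap⟩
  · exact absurd rfl hne
  · exact ⟨_, _, _, _, l.rot⟩
  · exact ⟨_, _, _, _, l.rot.rot⟩
  · exact ⟨_, _, _, _, l.rot.swap⟩
  · exact absurd rfl hne

/-- Points of `F ∩ G` lie on the ray. -/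
theorem Loc.ray (h : Ctx P f c) {v F G K d1 d2 d3} (l : Loc P f v F G K d1 d2 d3) {x : E3}
    (hx : x ∈ F) (hx' : x ∈ G) : x = v + (c K - f K x) • d3 ∧ 0 ≤ c K - f K x := by
  have h1 := l.dec (x - v)
  have e1 := h.on l.hF hx
  have e2 := h.on l.hF l.vF
  have e3 := h.on l.hG hx'
  have e4 := h.on l.hG l.vG
  have e5 := h.on l.hK l.vK
  simp only [map_sub, e1, e2, e3, e4, e5, sub_self, neg_zero, zero_smul, zero_add, neg_sub] at h1
  exact ⟨by rw [← h1]; abel, by linarith [h.le l.hK (facet_sub l.hF hx)]⟩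

theorem Loc.edge (h : Ctx P f c) {v F G K d1 d2 d3} (l : Loc P f v F G K d1 d2 d3) :
    IsEdgeOf (F ∩ G) P := by
  refine ⟨face_inter l.hF.1 l.hG.1 ⟨v, l.vF, l.vG⟩, ?_⟩
  have hd : d3 ≠ 0 := by
    rintro rfl
    have := l.K3
    simp at this
  have : vectorSpan ℝ (F ∩ G) = Submodule.span ℝ {d3} := by
    apply le_antisymm
    · rw [vectorSpan_eq_span_vsub_set_right ℝ (show v ∈ F ∩ G from ⟨l.vF, l.vG⟩), Submodule.span_le]
      rintro _ ⟨x, ⟨hx, hx'⟩, rfl⟩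
      have := (l.ray h hx hx').1
      simp only [vsub_eq_sub, SetLike.mem_coe]
      rw [Submodule.mem_span_singleton]
      refine ⟨c K - f K x, ?_⟩
      conv_rhs => rw [this]
      abel
    · rw [Submodule.span_singleton_le_iff_mem]
      obtain ⟨t, ht, hm⟩ := h.move (x := v) (d := d3) (facet_sub l.hF l.vF) (fun H hH hvH => by
        rcases l.only H hH hvH with rfl | rfl | rfl
        · exact l.F3.le
        · exact l.G3.le
        · rw [l.K3]; norm_num)
      have m1 : v + t • d3 ∈ F := h.mem l.hF hm (by simp [l.F3, h.on l.hF l.vF])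
      have m2 : v + t • d3 ∈ G := h.mem l.hG hm (by simp [l.G3, h.on l.hG l.vG])
      have h4 := sub_mem_vectorSpan (show v + t • d3 ∈ F ∩ G from ⟨m1, m2⟩) (show v ∈ F ∩ G from ⟨l.vF, l.vG⟩)
      rw [add_sub_cancel_left] at h4
      have := Submodule.smul_mem _ t⁻¹ h4
      rwa [smul_smul, inv_mul_cancel₀ ht.ne', one_smul] at this
  unfold setDim
  rw [this, finrank_span_singleton hd]

theorem vertex_extreme {v : E3} (hv : IsVertexOf v P) {x y : E3} (hx : x ∈ P) (hy : y ∈ P)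
    (h : v ∈ openSegment ℝ x y) : x = v :=
  ext_left hv.2.2.2 hx hy rfl h

/-- The two ends of the edge `F ∩ G`. -/
structure Ends (P F G : Set E3) (p q : E3) (K L : Set E3) : Prop where
  pv : IsVertexOf p P
  qv : IsVertexOf q P
  pq : p ≠ q
  pF : p ∈ F
  pG : p ∈ G
  pK : p ∈ K
  qF : q ∈ F
  qG : q ∈ G
  qL : q ∈ L
  hK : IsFacetOf K P
  hL : IsFacetOf L P
  KF : K ≠ F
  KG : K ≠ G
  LF : L ≠ F
  LG : L ≠ G
  qK : q ∉ K
  pL : p ∉ L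
  verts : ∀ w, IsVertexOf w P → w ∈ F → w ∈ G → w = p ∨ w = q
  third : ∀ H, IsFacetOf H P → H ≠ F → H ≠ G → (F ∩ G ∩ H).Nonempty → H = K ∨ H = L

theorem Ends.symm {F G K L : Set E3} {p q : E3} (e : Ends P F G p q K L) : Ends P F G q p L K := by
  obtain ⟨a1, a2, a3, a4, a5, a6, a7, a8, a9, b1, b2, b3, b4, b5, b6, b7, b8, b9, b10⟩ := e
  exact ⟨a2, a1, a3.symm, a7, a8, a9, a4, a5, a6, b2, b1, b5, b6, b3, b4, b8, b7,
    fun w h1 h2 h3 => (b9 w h1 h2 h3).symm, fun H h1 h2 h3 h4 => (b10 H h1 h2 h3 h4).symm⟩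

theorem Ctx.ends (h : Ctx P f c) {F G : Set E3} (hF : IsFacetOf F P) (hG : IsFacetOf G P)
    (hne : F ≠ G) (hI : (F ∩ G).Nonempty) : IsEdgeOf (F ∩ G) P ∧ ∃ p q K L, Ends P F G p q K L := by
  have hface := face_inter hF.1 hG.1 hI
  have hcomp := hface.compact h.poly
  obtain ⟨p, hp⟩ := hcomp.extremePoints_nonempty hI
  have vert : ∀ w ∈ (F ∩ G).extremePoints ℝ, IsVertexOf w P := fun w hw =>
    ⟨singleton_nonempty _, isClosed_singleton, convex_singleton _, by
      rw [isExtreme_singleton]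
      exact hface.2.2.2.extremePoints_subset_extremePoints hw⟩
  have pv := vert p hp
  obtain ⟨pF, pG⟩ := extremePoints_subset hp
  obtain ⟨K, d1, d2, d3, l⟩ := h.loc2 pv hF hG pF pG hne
  have hedge := l.edge h
  refine ⟨hedge, ?_⟩
  obtain ⟨q, hq, hqp⟩ : ∃ q ∈ (F ∩ G).extremePoints ℝ, q ≠ p := by
    by_contra hcon
    push Not at hcon
    have h1 : (F ∩ G).extremePoints ℝ = {p} := by
      apply subset_antisymm
      · intro w hw; exact hcon w hw
      · rintro _ rfl; exact hp
    have h2 := closure_convexHull_extremePoints hcomp hface.2.2.1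
    rw [h1, convexHull_singleton, closure_singleton] at h2
    have := hedge.2
    rw [← h2, setDim, vectorSpan_singleton] at this
    simp at this
  have qv := vert q hq
  obtain ⟨qF, qG⟩ := extremePoints_subset hq
  obtain ⟨L, e1, e2, e3, m⟩ := h.loc2 qv hF hG qF qG hne
  have verts : ∀ w, IsVertexOf w P → w ∈ F → w ∈ G → w = p ∨ w = q := by
    intro w hw wF wG
    by_contra hcon
    push Not at hcon
    obtain ⟨r1, r2⟩ := l.ray h qF qG
    obtain ⟨r3, r4⟩ := l.ray h wF wG
    generalize c K - f K q = s at *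
    generalize c K - f K w = t at *
    have hs : s ≠ 0 := by rintro rfl; apply hqp; simpa using r1
    have ht : t ≠ 0 := by rintro rfl; apply hcon.1; simpa using r3
    have hs0 : 0 < s := lt_of_le_of_ne r2 hs.symm
    have ht0 : 0 < t := lt_of_le_of_ne r4 ht.symm
    rcases lt_trichotomy s t with hst | hst | hst
    · have : q ∈ openSegment ℝ p w := by
        refine ⟨1 - s / t, s / t, ?_, by positivity, by ring, ?_⟩
        · rw [sub_pos, div_lt_one ht0]; exact hst
        · rw [r1, r3, smul_add, smul_smul, div_mul_cancel₀ _ ht]; module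
      exact hqp (vertex_extreme qv (facet_sub hF pF) (facet_sub hF wF) this).symm
    · apply hcon.2; rw [r1, r3, hst]
    · have : w ∈ openSegment ℝ p q := by
        refine ⟨1 - t / s, t / s, ?_, by positivity, by ring, ?_⟩
        · rw [sub_pos, div_lt_one hs0]; exact hst
        · rw [r1, r3, smul_add, smul_smul, div_mul_cancel₀ _ hs]; module
      exact hcon.1 (vertex_extreme hw (facet_sub hF pF) (facet_sub hF qF) this).symm
  have qK : q ∉ K := by
    intro hqK
    have := (l.ray h qF qG).1
    rw [h.on l.hK hqK] at this
    apply hqp; simpa using this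
  have pL : p ∉ L := by
    intro hpL
    have := (m.ray h pF pG).1
    rw [h.on m.hK hpL] at this
    apply hqp; symm; simpa using this
  refine ⟨p, q, K, L, pv, qv, hqp.symm, pF, pG, l.vK, qF, qG, m.vK, l.hK, m.hK, l.FK.symm, l.GK.symm,
    m.FK.symm, m.GK.symm, qK, pL, verts, ?_⟩
  intro H hH HF HG hn
  obtain ⟨w, ⟨⟨wF, wG⟩, wH⟩, wv⟩ := face_vertex h.poly (face_inter hface hH.1 hn)
  rcases verts w wv wF wG with rfl | rfl
  · have := l.only H hH wH; tauto
  · have := m.only H hH wH; tauto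

/-- No third facet contains both ends. -/
theorem Ends.not_both {F G K L : Set E3} {p q : E3} (e : Ends P F G p q K L) {H : Set E3}
    (hH : IsFacetOf H P) (hp : p ∈ H) (hq : q ∈ H) : H = F ∨ H = G := by
  by_contra hcon
  push Not at hcon
  rcases e.third H hH hcon.1 hcon.2 ⟨p, ⟨e.pF, e.pG⟩, hp⟩ with rfl | rfl
  · exact e.qK hq
  · exact e.pL hp

theorem Ctx.edge_facets (h : Ctx P f c) {e : Set E3} (he : IsEdgeOf e P) :
    ∃ F G, IsFacetOf F P ∧ IsFacetOf G P ∧ F ≠ G ∧ e = F ∩ G := by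
  obtain ⟨v, hve, hv⟩ := face_vertex h.poly he.1
  obtain ⟨F, G, K, d1, d2, d3, l⟩ := h.loc hv
  obtain ⟨z, hz⟩ := he.1.1.intrinsicInterior he.1.2.2.1
  have hze := intrinsicInterior_subset hz
  have heP := he.1.2.2.2.1
  have sub : ∀ H, IsFacetOf H P → z ∈ H → e ⊆ H := fun H hH hzH =>
    relint_subset heP hH.1.2.2.2 hz hzH
  have fin : ∀ {F G K d1 d2 d3}, Loc P f v F G K d1 d2 d3 → z ∈ F → z ∈ G → e = F ∩ G := by
    intro F G K d1 d2 d3 l h1 h2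
    have hE := l.edge h
    exact face_eq_of_dim he.1 hE.1 (subset_inter (sub F l.hF h1) (sub G l.hG h2))
      (he.2.trans hE.2.symm)
  have key : ∀ {F G K d1 d2 d3}, Loc P f v F G K d1 d2 d3 → z ∉ F → z ∉ G → False := by
    intro F G K d1 d2 d3 l h1 h2
    have m1 : d1 ∈ vectorSpan ℝ e := h.dir he.1 hze (fun H hH hzH => by
      rcases l.only H hH (sub H hH hzH hve) with rfl | rfl | rfl
      · exact absurd hzH h1
      · exact absurd hzH h2
      · exact l.K1)
    have m2 : d2 ∈ vectorSpan ℝ e := h.dir he.1 hze (fun H hH hzH => by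
      rcases l.only H hH (sub H hH hzH hve) with rfl | rfl | rfl
      · exact absurd hzH h1
      · exact absurd hzH h2
      · exact l.K2)
    obtain ⟨u, -, hu⟩ := finrank_eq_one_iff'.1 he.2
    obtain ⟨a, ha⟩ := hu ⟨d1, m1⟩
    obtain ⟨b, hb⟩ := hu ⟨d2, m2⟩
    have ha : d1 = a • (u : E3) := by simpa using (congrArg Subtype.val ha).symm
    have hb : d2 = b • (u : E3) := by simpa using (congrArg Subtype.val hb).symm
    have a1 := l.F1
    have a2 := l.F2
    have a3 := l.G2
    rw [ha] at a1
    rw [hb] at a2 a3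
    simp only [map_smul, smul_eq_mul] at a1 a2 a3
    rcases mul_eq_zero.1 a2 with h0 | h0
    · rw [h0] at a3; simp at a3
    · rw [h0] at a1; simp at a1
  by_cases zF : z ∈ F
  · by_cases zG : z ∈ G
    · exact ⟨F, G, l.hF, l.hG, l.FG, fin l zF zG⟩
    · by_cases zK : z ∈ K
      · exact ⟨K, F, l.hK, l.hF, l.FK.symm, fin l.rot.rot zK zF⟩
      · exact (key l.rot zG zK).elim
  · by_cases zG : z ∈ G
    · by_cases zK : z ∈ K
      · exact ⟨G, K, l.hG, l.hK, l.GK, fin l.rot zG zK⟩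
      · exact (key l.rot.rot zK zF).elim
    · exact (key l zF zG).elim

end Geom2

section Geom3
variable {P : Set E3} {f : Set E3 → E3 →L[ℝ] ℝ} {c : Set E3 → ℝ}

theorem Ctx.link (h : Ctx P f c) {F : Set E3} (hF : IsFacetOf F P) (N : Set (Set E3))
    (cl : ∀ B C, IsFacetOf B P → IsFacetOf C P → F ≠ B → B ≠ C → F ≠ C → (F ∩ B ∩ C).Nonempty →
      B ∈ N → C ∈ N)
    (hN : ∃ B ∈ N, IsFacetOf B P ∧ F ≠ B ∧ (F ∩ B).Nonempty)
    {b : Set E3} (hb : IsFacetOf b P) (hFb : F ≠ b) (hI : (F ∩ b).Nonempty) : b ∈ N := by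
  by_contra hbN
  obtain ⟨z, ⟨zF, zb⟩, zv⟩ := face_vertex h.poly (face_inter hF.1 hb.1 hI)
  obtain ⟨K0, a1, a2, a3, l⟩ := h.loc2 zv hF hb zF zb hFb
  have hK0 : K0 ∉ N := fun hk =>
    hbN (cl K0 b l.hK hb l.FK l.GK.symm hFb ⟨z, ⟨zF, l.vK⟩, zb⟩ hk)
  let Y : Set E3 := {v | IsVertexOf v P ∧ v ∈ F ∧ ∃ H ∈ N, IsFacetOf H P ∧ F ≠ H ∧ v ∈ H}
  have zY : z ∉ Y := by
    rintro ⟨-, -, H, hHN, hH, hne, zH⟩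
    rcases l.only H hH zH with rfl | rfl | rfl
    · exact hne rfl
    · exact hbN hHN
    · exact hK0 hHN
  have Yfin : Y.Finite := by
    have : (Y.image (fun v => ({v} : Set E3))).Finite := by
      apply (faces_finite h.poly).subset
      rintro _ ⟨v, hv, rfl⟩
      exact hv.1
    exact this.of_finite_image (fun a _ b _ hab => Set.singleton_injective hab)
  have Yne : Y.Nonempty := by
    obtain ⟨B, hB, hBf, hFB, hn⟩ := hN
    obtain ⟨y, ⟨yF, yB⟩, yv⟩ := face_vertex h.poly (face_inter hF.1 hBf.1 hn)
    exact ⟨y, yv, yF, B, hB, hBf, hFB, yB⟩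
  let g : E3 → ℝ := fun x => f b x + f K0 x
  obtain ⟨y, hy, hmax⟩ := Set.exists_max_image Y g Yfin Yne
  obtain ⟨yv, yF, H, hHN, hH, hFH, yH⟩ := hy
  obtain ⟨K, d1, d2, d3, m⟩ := h.loc2 yv hF hH yF yH hFH
  have hKN : K ∈ N := cl H K hH m.hK hFH m.GK m.FK ⟨y, ⟨yF, yH⟩, m.vK⟩ hHN
  have key : ∀ {H K d1 d2 d3}, Loc P f y F H K d1 d2 d3 → H ∈ N → g d3 ≤ 0 := by
    intro H K d1 d2 d3 m hHN
    by_contra hpos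
    push Not at hpos
    obtain ⟨y', hy'v, hy'F, hy'H, hne⟩ : ∃ y', IsVertexOf y' P ∧ y' ∈ F ∧ y' ∈ H ∧ y' ≠ y := by
      obtain ⟨-, p, q, _, _, e⟩ := h.ends hF m.hG m.FG ⟨y, m.vF, m.vG⟩
      by_cases hp : p = y
      · exact ⟨q, e.qv, e.qF, e.qG, fun hq => e.pq (hp.trans hq.symm)⟩
      · exact ⟨p, e.pv, e.pF, e.pG, hp⟩
    have h1 := hmax y' ⟨hy'v, hy'F, H, hHN, m.hG, m.FG, hy'H⟩
    obtain ⟨r1, r2⟩ := m.ray h hy'F hy'H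
    generalize c K - f K y' = t at *
    have ht : t ≠ 0 := by rintro rfl; apply hne; simpa using r1
    have ht0 : 0 < t := lt_of_le_of_ne r2 ht.symm
    have h2 := mul_pos ht0 hpos
    simp only [g, r1, map_add, map_smul, smul_eq_mul] at h1 h2
    nlinarith
  have k3 := key m hHN
  have k2 := key m.rot.rot.swap hKN
  have yP := facet_sub hF yF
  have zP := facet_sub hF zF
  have e1 := h.on hb zb
  have e2 := h.on l.hK l.vK
  have hlt : g y < g z := by
    apply lt_of_le_of_ne
    · simp only [g]; linarith [h.le hb yP, h.le l.hK yP]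
    · intro he
      simp only [g] at he
      have l1 := h.le hb yP
      have l2 := h.le l.hK yP
      have yb := h.mem hb yP (by linarith)
      have e3 : f K0 y = c K0 := by linarith
      have := (l.ray h yF yb).1
      rw [e3] at this
      apply zY
      have hyz : y = z := by simpa using this
      rw [← hyz]
      exact ⟨yv, yF, H, hHN, hH, hFH, yH⟩
  have dec := m.dec (z - y)
  have e4 := h.on hF zF
  have e5 := h.on hF yF
  have e6 := h.on hH yH
  have e7 := h.on m.hK m.vK
  simp only [map_sub, e4, e5, e6, e7, sub_self, neg_zero, zero_smul, zero_add, neg_sub] at dec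
  have s1 := h.le hH zP
  have s2 := h.le m.hK zP
  have gg : g z - g y = (c H - f H z) * g d2 + (c K - f K z) * g d3 := by
    have u1 := congrArg (f b) dec
    have u2 := congrArg (f K0) dec
    simp only [map_sub, map_add, map_smul, smul_eq_mul] at u1 u2
    simp only [g]
    linarith
  nlinarith [mul_nonneg (sub_nonneg.2 s1) (neg_nonneg.2 k2), mul_nonneg (sub_nonneg.2 s2) (neg_nonneg.2 k3)]

/-- The type of facets. -/
abbrev Fac (P : Set E3) := {F : Set E3 // IsFacetOf F P}

/-- Three distinct facets with a common point. -/
def TT (P : Set E3) (a b c : Fac P) : Prop :=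
  a ≠ b ∧ b ≠ c ∧ a ≠ c ∧ (a.1 ∩ b.1 ∩ c.1).Nonempty

theorem Ctx.adj (h : Ctx P f c) (a b : Fac P) :
    Adjf (TT P) a b ↔ a ≠ b ∧ (a.1 ∩ b.1).Nonempty := by
  constructor
  · rintro ⟨d, h1, h2, h3, x, hx⟩
    exact ⟨h1, x, hx.1⟩
  · rintro ⟨h1, h2⟩
    obtain ⟨-, p, q, K, L, e⟩ := h.ends a.2 b.2 (fun he => h1 (Subtype.ext he)) h2
    exact ⟨⟨K, e.hK⟩, h1, fun he => e.KG (congrArg Subtype.val he).symm,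
      fun he => e.KF (congrArg Subtype.val he).symm, p, ⟨e.pF, e.pG⟩, e.pK⟩

theorem Ctx.surf (h : Ctx P f c) : Surf (TT P) where
  s1 := by
    rintro a b d ⟨h1, h2, h3, x, ⟨x1, x2⟩, x3⟩
    exact ⟨h1.symm, h3, h2, x, ⟨x2, x1⟩, x3⟩
  s2 := by
    rintro a b d ⟨h1, h2, h3, x, ⟨x1, x2⟩, x3⟩
    exact ⟨h3, h2.symm, h1, x, ⟨x1, x3⟩, x2⟩
  ne := fun _ _ _ hT => hT.1
  two := by
    rintro a b d ⟨h1, h2, h3, hx⟩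
    obtain ⟨-, p, q, K, L, e⟩ := h.ends a.2 b.2 (fun he => h1 (Subtype.ext he))
      (hx.mono inter_subset_left)
    have aux : ∀ {p q K L}, Ends P a.1 b.1 p q K L → d.1 = K →
        ∃ d', d' ≠ d ∧ TT P a b d' ∧ ∀ e, TT P a b e → e = d ∨ e = d' := by
      intro p q K L e hd
      refine ⟨⟨L, e.hL⟩, ?_, ⟨h1, fun he => e.LG (congrArg Subtype.val he).symm,
        fun he => e.LF (congrArg Subtype.val he).symm, q, ⟨e.qF, e.qG⟩, e.qL⟩, ?_⟩
      · intro he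
        have := congrArg Subtype.val he
        simp only at this
        exact e.qK (hd ▸ this ▸ e.qL)
      · rintro x ⟨-, y2, y3, y4⟩
        rcases e.third x.1 x.2 (fun he => y3 (Subtype.ext he).symm)
          (fun he => y2 (Subtype.ext he).symm) y4 with hh | hh
        · left; exact Subtype.ext (hh.trans hd.symm)
        · right; exact Subtype.ext hh
    rcases e.third d.1 d.2 (fun he => h3 (Subtype.ext he).symm)
      (fun he => h2 (Subtype.ext he).symm) hx with hd | hd
    · exact aux e hd
    · exact aux e.symm hd
  link := by
    rintro a N ⟨b, hbN, hb⟩ cl b' hb'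
    have hb := (h.adj a b).1 hb
    have hb' := (h.adj a b').1 hb'
    have := h.link a.2 (Subtype.val '' N) (by
      rintro B C hB hC n1 n2 n3 hne ⟨B', hB', rfl⟩
      exact ⟨⟨C, hC⟩, cl B' ⟨C, hC⟩ hB' ⟨fun he => n1 (congrArg Subtype.val he),
        fun he => n2 (congrArg Subtype.val he), fun he => n3 (congrArg Subtype.val he), hne⟩, rfl⟩)
      ⟨b.1, ⟨b, hbN, rfl⟩, b.2, fun he => hb.1 (Subtype.ext he), hb.2⟩ b'.2
      (fun he => hb'.1 (Subtype.ext he)) hb'.2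
    obtain ⟨x, hx, hxe⟩ := this
    rwa [← Subtype.ext hxe]

open Classical in
theorem Ctx.deg [Fintype (Fac P)] (h : Ctx P f c) (a : Fac P) :
    facetEdges P a.1 = (Nb (TT P) a).card := by
  unfold facetEdges
  have : {e | IsEdgeOf e P ∧ e ⊆ a.1} = (fun b : Fac P => a.1 ∩ b.1) '' (Nb (TT P) a : Set (Fac P)) := by
    ext e
    constructor
    · rintro ⟨he, hea⟩
      obtain ⟨F, G, hF, hG, hne, rfl⟩ := h.edge_facets he
      obtain ⟨-, p, q, K, L, en⟩ := h.ends hF hG hne he.1.1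
      rcases en.not_both a.2 (hea ⟨en.pF, en.pG⟩) (hea ⟨en.qF, en.qG⟩) with hh | hh
      · refine ⟨⟨G, hG⟩, ?_, by simp [hh]⟩
        simp only [Finset.mem_coe, mem_Nb]
        rw [h.adj]
        refine ⟨fun hx => hne (hh ▸ congrArg Subtype.val hx), by rw [hh]; exact he.1.1⟩
      · refine ⟨⟨F, hF⟩, ?_, by simp [hh, inter_comm]⟩
        simp only [Finset.mem_coe, mem_Nb]
        rw [h.adj]
        refine ⟨fun hx => hne ?_, by rw [hh, inter_comm]; exact he.1.1⟩
        exact (congrArg Subtype.val hx).symm.trans hh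
    · rintro ⟨b, hb, rfl⟩
      simp only [Finset.mem_coe, mem_Nb] at hb
      rw [h.adj] at hb
      exact ⟨(h.ends a.2 b.2 (fun he => hb.1 (Subtype.ext he)) hb.2).1, inter_subset_left⟩
  rw [this, Set.InjOn.ncard_image, Set.ncard_coe_finset]
  intro b hb b' hb' he
  simp only [Finset.mem_coe, mem_Nb] at hb hb'
  rw [h.adj] at hb hb'
  simp only at he
  obtain ⟨-, p, q, K, L, en⟩ := h.ends a.2 b'.2 (fun he => hb'.1 (Subtype.ext he)) hb'.2
  have h1 : p ∈ a.1 ∩ b.1 := by rw [he]; exact ⟨en.pF, en.pG⟩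
  have h2 : q ∈ a.1 ∩ b.1 := by rw [he]; exact ⟨en.qF, en.qG⟩
  rcases en.not_both b.2 h1.2 h2.2 with hh | hh
  · exact absurd (Subtype.ext hh).symm hb.1
  · exact Subtype.ext hh

open Classical in
theorem Ctx.deg3 [Fintype (Fac P)] (h : Ctx P f c) (a : Fac P) :
    3 ≤ (Nb (TT P) a).card := by
  obtain ⟨v, va, vv⟩ := face_vertex h.poly a.2.1
  obtain ⟨b, hb, hab, vb⟩ : ∃ b, IsFacetOf b P ∧ a.1 ≠ b ∧ v ∈ b := by
    obtain ⟨F, G, K, d1, d2, d3, l⟩ := h.loc vv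
    by_cases hF : a.1 = F
    · exact ⟨G, l.hG, fun hh => l.FG (hF.symm.trans hh), l.vG⟩
    · exact ⟨F, l.hF, hF, l.vF⟩
  obtain ⟨-, p, q, K, L, e⟩ := h.ends a.2 hb hab ⟨v, va, vb⟩
  have hsub : ({⟨b, hb⟩, ⟨K, e.hK⟩, ⟨L, e.hL⟩} : Finset (Fac P)) ⊆ Nb (TT P) a := by
    intro x hx
    simp only [Finset.mem_insert, Finset.mem_singleton] at hx
    rw [mem_Nb, h.adj]
    rcases hx with rfl | rfl | rfl
    · exact ⟨fun hh => hab (congrArg Subtype.val hh), v, va, vb⟩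
    · exact ⟨fun hh => e.KF (congrArg Subtype.val hh).symm, p, e.pF, e.pK⟩
    · exact ⟨fun hh => e.LF (congrArg Subtype.val hh).symm, q, e.qF, e.qL⟩
  have hcard : ({⟨b, hb⟩, ⟨K, e.hK⟩, ⟨L, e.hL⟩} : Finset (Fac P)).card = 3 := by
    apply Finset.card_eq_three.2
    exact ⟨_, _, _, fun hh => e.KG (congrArg Subtype.val hh).symm,
      fun hh => e.LG (congrArg Subtype.val hh).symm,
      fun hh => e.qK (by have := congrArg Subtype.val hh; simp only at this; rw [this]; exact e.qL), rfl⟩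
  rw [← hcard]
  exact Finset.card_le_card hsub

open Classical in
theorem Ctx.pvec [Fintype (Fac P)] (h : Ctx P f c) (k : ℕ) :
    pVec P k = (Finset.univ.filter (fun a : Fac P => (Nb (TT P) a).card = k)).card := by
  unfold pVec
  have : {F | IsFacetOf F P ∧ facetEdges P F = k} = Subtype.val ''
      ((Finset.univ.filter (fun a : Fac P => (Nb (TT P) a).card = k) : Finset (Fac P)) : Set (Fac P)) := by
    ext F
    constructor
    · rintro ⟨hF, hk⟩
      refine ⟨⟨F, hF⟩, ?_, rfl⟩
      simp only [Finset.coe_filter, Finset.mem_univ, true_and, mem_ofPred]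
      rw [← h.deg]; exact hk
    · rintro ⟨a, ha, rfl⟩
      simp only [Finset.coe_filter, Finset.mem_univ, true_and, mem_ofPred] at ha
      rw [← h.deg] at ha
      exact ⟨a.2, ha⟩
  rw [this, Set.ncard_image_of_injective _ Subtype.val_injective, Set.ncard_coe_finset]

end Geom3

section Geom4
variable {P : Set E3} {f : Set E3 → E3 →L[ℝ] ℝ} {c : Set E3 → ℝ}

theorem Ctx.plane (h : Ctx P f c) {A B C : Set E3} (hA : IsFacetOf A P) (hB : IsFacetOf B P)
    (hC : IsFacetOf C P) {x y z : E3} (xB : x ∈ B) (xC : x ∈ C) (xA : x ∉ A)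
    (yC : y ∈ C) (yA : y ∈ A) (yB : y ∉ B) (zA : z ∈ A) (zB : z ∈ B) (zC : z ∉ C) :
    ∃ g : E3 →ₗ[ℝ] ℝ, g y = g x ∧ g z = g x ∧ ∀ K, IsFacetOf K P → x ∉ K → y ∉ K → z ∉ K →
      ∀ w ∈ K, g w ≠ g x := by
  have xP := facet_sub hB xB
  have yP := facet_sub hC yC
  have zP := facet_sub hA zA
  have a1 := h.lt hA xP xA
  have a2 := h.on hA yA
  have a3 := h.on hA zA
  have b1 := h.on hB xB
  have b2 := h.lt hB yP yB
  have b3 := h.on hB zB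
  have c1 := h.on hC xC
  have c2 := h.on hC yC
  have c3 := h.lt hC zP zC
  have hli : LinearIndependent ℝ ![y - x, z - x] := by
    rw [LinearIndependent.pair_iff]
    intro s t hst
    have u1 := congrArg (f B) hst
    have u2 := congrArg (f C) hst
    simp only [map_add, map_smul, map_sub, smul_eq_mul, map_zero, b1, b3, c1, c2, sub_self,
      mul_zero, add_zero, zero_add, mul_eq_zero] at u1 u2
    constructor
    · rcases u1 with u | u
      · exact u
      · linarith
    · rcases u2 with u | u
      · exact u
      · linarith
  have hfin : Module.finrank ℝ (Submodule.span ℝ {y - x, z - x}) = 2 := by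
    have := finrank_span_eq_card hli
    rw [Matrix.range_cons_cons_empty] at this
    simpa using this
  have hlt : Submodule.span ℝ {y - x, z - x} < ⊤ := by
    rw [lt_top_iff_ne_top]
    intro ht
    rw [ht] at hfin
    simp at hfin
  obtain ⟨g, g0, hg⟩ := Submodule.exists_le_ker_of_lt_top _ hlt
  have hker : Submodule.span ℝ {y - x, z - x} = LinearMap.ker g := by
    apply Submodule.eq_of_le_of_finrank_eq hg
    have := finrank_ker3 (f := LinearMap.toContinuousLinearMap g) (by
      intro h0; apply g0; ext v; simpa using DFunLike.congr_fun h0 v)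
    rw [hfin]
    exact this.symm
  have gy : g (y - x) = 0 := hg (Submodule.subset_span (by simp))
  have gz : g (z - x) = 0 := hg (Submodule.subset_span (by simp))
  rw [map_sub, sub_eq_zero] at gy gz
  refine ⟨g, gy, gz, ?_⟩
  intro K hK xK yK zK w wK hw
  have wP := facet_sub hK wK
  have hm : w - x ∈ Submodule.span ℝ {y - x, z - x} := by
    rw [hker, LinearMap.mem_ker, map_sub, hw, sub_self]
  obtain ⟨s, t, hst⟩ := Submodule.mem_span_pair.1 hm
  have k1 := h.lt hK xP xK
  have k2 := h.lt hK yP yK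
  have k3 := h.lt hK zP zK
  have k4 := h.on hK wK
  have u1 := congrArg (f A) hst
  have u2 := congrArg (f B) hst
  have u3 := congrArg (f C) hst
  have u4 := congrArg (f K) hst
  simp only [map_add, map_smul, map_sub, smul_eq_mul] at u1 u2 u3 u4
  have v1 := h.le hA wP
  have v2 := h.le hB wP
  have v3 := h.le hC wP
  rw [a2, a3] at u1
  rw [b1, b3] at u2
  rw [c1, c2] at u3
  have hs : 0 ≤ s := by
    by_contra hn
    push Not at hn
    nlinarith
  have ht : 0 ≤ t := by
    by_contra hn
    push Not at hn
    nlinarith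
  have hr : 0 ≤ 1 - s - t := by
    by_contra hn
    push Not at hn
    nlinarith
  have e : (1 - s - t) * (c K - f K x) + s * (c K - f K y) + t * (c K - f K z) = 0 := by
    linarith
  have p1 := mul_nonneg hr (sub_pos.2 k1).le
  have p2 := mul_nonneg hs (sub_pos.2 k2).le
  have p3 := mul_nonneg ht (sub_pos.2 k3).le
  have q1 : (1 - s - t) * (c K - f K x) = 0 := by linarith
  have q2 : s * (c K - f K y) = 0 := by linarith
  have q3 : t * (c K - f K z) = 0 := by linarith
  have r1 := (mul_eq_zero.1 q1).resolve_right (sub_pos.2 k1).ne'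
  have r2 := (mul_eq_zero.1 q2).resolve_right (sub_pos.2 k2).ne'
  have r3 := (mul_eq_zero.1 q3).resolve_right (sub_pos.2 k3).ne'
  linarith

theorem side_of {K : Set E3} (hK : Convex ℝ K) (g : E3 →ₗ[ℝ] ℝ) (r : ℝ) (h : ∀ w ∈ K, g w ≠ r) :
    (∀ w ∈ K, r < g w) ∨ (∀ w ∈ K, g w < r) := by
  by_contra hcon
  push Not at hcon
  obtain ⟨⟨u, hu, hu'⟩, ⟨v, hv, hv'⟩⟩ := hcon
  have hc : Convex ℝ (g '' K) := hK.is_linear_image g.isLinear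
  have : r ∈ g '' K := hc.ordConnected.out ⟨u, hu, rfl⟩ ⟨v, hv, rfl⟩ ⟨hu', hv'⟩
  obtain ⟨w, hw, hw'⟩ := this
  exact h w hw hw'

theorem Ends.mid {F G K L : Set E3} {p q : E3} (e : Ends P F G p q K L) (hF : IsFacetOf F P)
    (hG : IsFacetOf G P) :
    midpoint ℝ p q ∈ F ∧ midpoint ℝ p q ∈ G ∧
      ∀ H, IsFacetOf H P → midpoint ℝ p q ∈ H → H = F ∨ H = G := by
  refine ⟨hF.1.2.2.1.midpoint_mem e.pF e.qF, hG.1.2.2.1.midpoint_mem e.pG e.qG, ?_⟩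
  intro H hH hm
  have hp := facet_sub hF e.pF
  have hq := facet_sub hF e.qF
  have h1 := midpoint_mem_openSegment (𝕜 := ℝ) p q
  exact e.not_both hH (ext_left hH.1.2.2.2 hp hq hm h1)
    (ext_left hH.1.2.2.2 hq hp hm (by rw [openSegment_symm]; exact h1))

theorem Ctx.noBelt (h : Ctx P f c) [Fintype (Fac P)] (a b d : Fac P)
    (hab : a ≠ b) (hbd : b ≠ d) (had : a ≠ d)
    (iab : (a.1 ∩ b.1).Nonempty) (ibd : (b.1 ∩ d.1).Nonempty) (iad : (a.1 ∩ d.1).Nonempty)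
    (hE : a.1 ∩ b.1 ∩ d.1 = ∅) : ∃ S S' : Finset (Fac P), Side (TT P) a b d S ∧
      Side (TT P) a b d S' ∧ Disjoint S S' := by
  classical
  have vne : ∀ {x y : Fac P}, x ≠ y → x.1 ≠ y.1 := fun hn he => hn (Subtype.ext he)
  have hE' : ∀ w, w ∈ a.1 → w ∈ b.1 → w ∈ d.1 → False := fun w h1 h2 h3 => by
    have : w ∈ a.1 ∩ b.1 ∩ d.1 := ⟨⟨h1, h2⟩, h3⟩
    rw [hE] at this
    exact this
  obtain ⟨-, p1, q1, K1, L1, e1⟩ := h.ends a.2 b.2 (vne hab) iab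
  obtain ⟨-, p2, q2, K2, L2, e2⟩ := h.ends b.2 d.2 (vne hbd) ibd
  obtain ⟨-, p3, q3, K3, L3, e3⟩ := h.ends a.2 d.2 (vne had) iad
  obtain ⟨m1, m1', n1⟩ := e1.mid a.2 b.2
  obtain ⟨m2, m2', n2⟩ := e2.mid b.2 d.2
  obtain ⟨m3, m3', n3⟩ := e3.mid a.2 d.2
  obtain ⟨g, g1, g2, hg⟩ := h.plane a.2 b.2 d.2 m2 m2' (fun hm => hE' _ hm m2 m2')
    m3' m3 (fun hm => hE' _ m3 hm m3') m1 m1' (fun hm => hE' _ m1 m1' hm)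
  set r := g (midpoint ℝ p2 q2) with hr
  have sd : ∀ K : Fac P, K ≠ a → K ≠ b → K ≠ d →
      (∀ w ∈ K.1, r < g w) ∨ (∀ w ∈ K.1, g w < r) := by
    intro K ka kb kd
    apply side_of K.2.1.2.2.1
    apply hg K.1 K.2
    · intro hm; rcases n2 _ K.2 hm with hh | hh
      · exact kb (Subtype.ext hh)
      · exact kd (Subtype.ext hh)
    · intro hm; rcases n3 _ K.2 hm with hh | hh
      · exact ka (Subtype.ext hh)
      · exact kd (Subtype.ext hh)
    · intro hm; rcases n1 _ K.2 hm with hh | hh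
      · exact ka (Subtype.ext hh)
      · exact kb (Subtype.ext hh)
  have gm : ∀ p q : E3, g (midpoint ℝ p q) = (g p + g q) / 2 := by
    intro p q
    rw [midpoint_eq_smul_add]
    simp only [map_smul, map_add, smul_eq_mul, invOf_eq_inv]
    ring
  let U : Finset (Fac P) := Finset.univ.filter
    (fun K => K ≠ a ∧ K ≠ b ∧ K ≠ d ∧ ∀ w ∈ K.1, r < g w)
  let W : Finset (Fac P) := Finset.univ.filter
    (fun K => K ≠ a ∧ K ≠ b ∧ K ≠ d ∧ ∀ w ∈ K.1, g w < r)
  have hdis : Disjoint U W := by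
    rw [Finset.disjoint_left]
    intro K h1 h2
    simp only [U, W, Finset.mem_filter, Finset.mem_univ, true_and] at h1 h2
    obtain ⟨w, hw⟩ := K.2.1.1
    linarith [h1.2.2.2 w hw, h2.2.2.2 w hw]
  have edge : ∀ x y z : Fac P, x ≠ y → (∀ w, w ∈ x.1 → w ∈ y.1 → w ∈ z.1 → False) →
      (∀ K : Fac P, K ≠ x → K ≠ y → K ≠ z → K ≠ a ∧ K ≠ b ∧ K ≠ d) →
      ∀ p q K L, Ends P x.1 y.1 p q K L → g (midpoint ℝ p q) = r →
      ∃ u w, u ∈ U ∧ w ∈ W ∧ TT P x y u ∧ TT P x y w := by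
    intro x y z hxy hz hK p q K L e hm
    rw [gm] at hm
    have aux : ∀ {p q K L}, Ends P x.1 y.1 p q K L → ∃ u : Fac P, p ∈ u.1 ∧ q ∉ u.1 ∧ TT P x y u ∧
        u ≠ a ∧ u ≠ b ∧ u ≠ d := by
      intro p q K L e
      refine ⟨⟨K, e.hK⟩, e.pK, e.qK, ⟨hxy, fun he => e.KG (congrArg Subtype.val he).symm,
        fun he => e.KF (congrArg Subtype.val he).symm, p, ⟨e.pF, e.pG⟩, e.pK⟩,
        hK _ (fun he => e.KF (congrArg Subtype.val he)) (fun he => e.KG (congrArg Subtype.val he))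
        (fun he => hz p e.pF e.pG (by rw [← he]; exact e.pK))⟩
    obtain ⟨u, pu, qu, tu, u1, u2, u3⟩ := aux e
    obtain ⟨w, qw, pw, tw, w1, w2, w3⟩ := aux e.symm
    rcases sd u u1 u2 u3 with hu | hu
    · have := hu p pu
      refine ⟨u, w, by simp only [U, Finset.mem_filter, Finset.mem_univ, true_and]; exact ⟨u1, u2, u3, hu⟩, ?_, tu, tw⟩
      simp only [W, Finset.mem_filter, Finset.mem_univ, true_and]
      refine ⟨w1, w2, w3, ?_⟩
      rcases sd w w1 w2 w3 with hw | hw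
      · linarith [hw q qw]
      · exact hw
    · have := hu p pu
      refine ⟨w, u, ?_, by simp only [W, Finset.mem_filter, Finset.mem_univ, true_and]; exact ⟨u1, u2, u3, hu⟩, tw, tu⟩
      simp only [U, Finset.mem_filter, Finset.mem_univ, true_and]
      refine ⟨w1, w2, w3, ?_⟩
      rcases sd w w1 w2 w3 with hw | hw
      · exact hw
      · linarith [hw q qw]
  have E1 := edge a b d hab hE' (fun K h1 h2 h3 => ⟨h1, h2, h3⟩) _ _ _ _ e1 g2
  have E2 := edge b d a hbd (fun w h1 h2 h3 => hE' w h3 h1 h2) (fun K h1 h2 h3 => ⟨h3, h1, h2⟩)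
    _ _ _ _ e2 rfl
  have E3' := edge a d b had (fun w h1 h2 h3 => hE' w h1 h3 h2) (fun K h1 h2 h3 => ⟨h1, h3, h2⟩)
    _ _ _ _ e3 g1
  have nT : ¬ TT P a b d := by
    rintro ⟨-, -, -, w, ⟨h1, h2⟩, h3⟩
    exact hE' w h1 h2 h3
  have t1 : ∀ {x y : Fac P}, (∃ u w, u ∈ U ∧ w ∈ W ∧ TT P x y u ∧ TT P x y w) →
      ∃ u w, u ∈ U ∧ w ∉ U ∧ TT P x y u ∧ TT P x y w := by
    rintro x y ⟨u, w, h1, h2, h3, h4⟩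
    exact ⟨u, w, h1, fun hw => Finset.disjoint_left.1 hdis hw h2, h3, h4⟩
  have t2 : ∀ {x y : Fac P}, (∃ u w, u ∈ U ∧ w ∈ W ∧ TT P x y u ∧ TT P x y w) →
      ∃ u w, u ∈ W ∧ w ∉ W ∧ TT P x y u ∧ TT P x y w := by
    rintro x y ⟨u, w, h1, h2, h3, h4⟩
    exact ⟨w, u, h2, fun hw => Finset.disjoint_left.1 hdis h1 hw, h4, h3⟩
  refine ⟨U, W, ⟨nT, by simp [U], by simp [U], by simp [U], ?_, t1 E1, t1 E2, t1 E3'⟩,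
    ⟨nT, by simp [W], by simp [W], by simp [W], ?_, t2 E1, t2 E2, t2 E3'⟩, hdis⟩
  · intro x hx y hxy
    obtain ⟨-, w, hw, hw'⟩ := (h.adj x y).1 hxy
    by_cases ya : y = a
    · tauto
    by_cases yb : y = b
    · tauto
    by_cases yd : y = d
    · tauto
    left
    simp only [U, Finset.mem_filter, Finset.mem_univ, true_and] at hx ⊢
    refine ⟨ya, yb, yd, ?_⟩
    rcases sd y ya yb yd with hh | hh
    · exact hh
    · linarith [hh w hw', hx.2.2.2 w hw]
  · intro x hx y hxy
    obtain ⟨-, w, hw, hw'⟩ := (h.adj x y).1 hxy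
    by_cases ya : y = a
    · tauto
    by_cases yb : y = b
    · tauto
    by_cases yd : y = d
    · tauto
    left
    simp only [W, Finset.mem_filter, Finset.mem_univ, true_and] at hx ⊢
    refine ⟨ya, yb, yd, ?_⟩
    rcases sd y ya yb yd with hh | hh
    · linarith [hh w hw', hx.2.2.2 w hw]
    · exact hh

end Geom4

/-- A simple 3-polytope with `p₃ = 0`, `p₄ ≤ 2`, `p₇ ≤ 1` and `pₖ = 0` for `k ≥ 8`
has no 3-belts; in particular it is a flag 3-polytope. -/
theorem no_three_belts (P : Set E3) (hP : IsSimplePolytope3 P)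
    (h3 : pVec P 3 = 0) (h4 : pVec P 4 ≤ 2) (h7 : pVec P 7 ≤ 1)
    (h8 : ∀ m, 8 ≤ m → pVec P m = 0) :
    (∀ B : Fin 3 → Set E3, ¬ IsBelt P B) ∧ IsFlag3Polytope P := by
  classical
  obtain ⟨f, c, h⟩ := exists_ctx hP
  have : Fintype (Fac P) := h.fin.fintype
  have hd : ∀ x : Fac P, 4 ≤ (Nb (TT P) x).card ∧ (Nb (TT P) x).card ≤ 7 := by
    intro x
    have hz : ∀ k, pVec P k = 0 → (Nb (TT P) x).card ≠ k := by
      intro k hk hx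
      rw [h.pvec, Finset.card_eq_zero] at hk
      have : x ∈ Finset.univ.filter (fun a : Fac P => (Nb (TT P) a).card = k) := by simp [hx]
      rw [hk] at this
      simp at this
    have h0 := h.deg3 x
    have h1 := hz 3 h3
    refine ⟨by omega, ?_⟩
    by_contra hcon
    exact hz _ (h8 _ (by omega)) rfl
  have nb : ∀ B : Fin 3 → Set E3, ¬ IsBelt P B := by
    rintro B ⟨-, ⟨-, hf, he⟩, hE, -⟩
    have he := he (by norm_num)
    have hE := hE rfl 0
    have e0 : IsEdgeOf (B 0 ∩ B 1) P := he 0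
    have e1 : IsEdgeOf (B 1 ∩ B 2) P := he 1
    have e2 : IsEdgeOf (B 2 ∩ B 0) P := he 2
    have hE : B 0 ∩ B 1 ∩ B 2 = ∅ := hE
    have ne : ∀ i j, IsEdgeOf (B i ∩ B j) P → B i ≠ B j := by
      intro i j hij hn
      have h1 := hij.2
      rw [hn, inter_self, (hf j).2] at h1
      omega
    obtain ⟨S, S', s, s', dis⟩ := h.noBelt ⟨B 0, hf 0⟩ ⟨B 1, hf 1⟩ ⟨B 2, hf 2⟩
      (fun hh => ne _ _ e0 (congrArg Subtype.val hh)) (fun hh => ne _ _ e1 (congrArg Subtype.val hh))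
      (fun hh => ne _ _ e2 (congrArg Subtype.val hh).symm) e0.1.1 e1.1.1
      (by rw [inter_comm]; exact e2.1.1) hE
    refine Surf.main h.surf hd ?_ ?_ _ _ _ S S' s s' dis
    · have := h.pvec 4
      rw [this] at h4
      convert h4
    · have := h.pvec 7
      rw [this] at h7
      convert h7
  refine ⟨nb, hP, ?_, nb⟩
  intro h4'
  have hcard : Fintype.card (Fac P) = 4 := by
    rw [← h4', facets, ← Nat.card_coe_set_eq, ← Nat.card_eq_fintype_card]
    rfl
  obtain ⟨x⟩ : Nonempty (Fac P) := by
    rw [← Fintype.card_pos_iff]; omega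
  have h1 := (hd x).1
  have hx : x ∉ Nb (TT P) x := by
    rw [mem_Nb, h.adj]
    exact fun hh => hh.1 rfl
  have h2 := Finset.card_lt_univ_of_notMem hx
  omega
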